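/- arXiv:1811.04501 — 7 statements merged into one kernel-verified Lean document; each statement's English description precedes it below -/
import Mathlib

section
/- For every real number s > 2, the double series ∑_{m≥1} ∑_{n≥1} m / (n·(m+n)^{2(s−1)}) converges; that is, the family ( m / (n·(m+n)^{2(s−1)}) )_{(m,n)∈ℤ_{≥1}×ℤ_{≥1}} of nonnegative reals is summable. -/
/-- For every real `s > 2` the double series `∑_{m≥1} ∑_{n≥1} m/(n (m+n)^{2(s-1)})`
converges: the corresponding family of nonnegative reals is summable. -/
theorem stmt_4 (s : ℝ) (hs : 2 < s) :
    Summable (fun p : ℕ+ × ℕ+ =>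
      (p.1 : ℝ) / ((p.2 : ℝ) * ((p.1 : ℝ) + (p.2 : ℝ)) ^ (2 * (s - 1)))) := by
  have h1 : Summable (fun n : ℕ+ => (((n : ℕ) : ℝ) ^ (s - 1))⁻¹) :=
    (Real.summable_nat_rpow_inv.2 (by linarith : 1 < s - 1)).comp_injective PNat.coe_injective
  have h2 := h1.mul_of_nonneg h1 (fun n => by positivity) (fun n => by positivity)
  refine Summable.of_nonneg_of_le (fun p => by positivity) ?_ h2
  rintro ⟨m, n⟩
  have hm : (0 : ℝ) < ((m : ℕ) : ℝ) := by exact_mod_cast m.pos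
  have hn : (0 : ℝ) < ((n : ℕ) : ℝ) := by exact_mod_cast n.pos
  simp only
  generalize ((m : ℕ) : ℝ) = a at *
  generalize ((n : ℕ) : ℝ) = b at *
  have e1 : (a + b) ^ (2 * (s - 1)) = (a + b) ^ s * (a + b) ^ (s - 2) := by
    rw [← Real.rpow_add (by positivity)]; congr 1; ring
  have e2 : a ^ s = a * a ^ (s - 1) := by
    rw [← Real.rpow_one_add' hm.le (by linarith)]; congr 1; ring
  have e3 : b ^ (s - 1) = b * b ^ (s - 2) := by
    rw [← Real.rpow_one_add' hn.le (by linarith)]; congr 1; ring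
  have k1 : a ^ s ≤ (a + b) ^ s := Real.rpow_le_rpow hm.le (by linarith) (by linarith)
  have k2 : b ^ (s - 2) ≤ (a + b) ^ (s - 2) :=
    Real.rpow_le_rpow hn.le (by linarith) (by linarith)
  rw [e1]
  calc a / (b * ((a + b) ^ s * (a + b) ^ (s - 2))) ≤ a / (b * (a ^ s * b ^ (s - 2))) := by
        gcongr
    _ = (a ^ (s - 1))⁻¹ * (b ^ (s - 1))⁻¹ := by
        rw [e2, e3]
        have := Real.rpow_pos_of_pos hm (s - 1)
        have := Real.rpow_pos_of_pos hn (s - 2)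
        field_simp
end

section
/- Let γ̃ : ℝ → ℝ be continuously differentiable with γ̃'(θ) > 0 and γ̃(θ+2π) = γ̃(θ) + 2π for all θ. For t ∈ [0,1] set γ̃_t = t·γ̃ + (1−t)·id, and let η_t denote the inverse function of γ̃_t. Then for integers m < 0 < n, setting t = n/(|m|+n), one has (1/2π)∫₀^{2π} e^{−imθ} e^{inγ̃(θ)} dθ = (1/2π)∫₀^{2π} e^{i(|m|+n)φ} η_t'(φ) dφ; and for integers n < 0 < m, setting t = |n|/(m+|n|), one has (1/2π)∫₀^{2π} e^{−imθ} e^{inγ̃(θ)} dθ = (1/2π)∫₀^{2π} e^{−i(m+|n|)φ} η_t'(φ) dφ. -/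
open scoped Real

lemma aux_key (γ : ℝ → ℝ)
    (hC1 : ContDiff ℝ 1 γ) (hpos : ∀ θ : ℝ, 0 < deriv γ θ)
    (hper : ∀ θ : ℝ, γ (θ + 2 * π) = γ θ + 2 * π)
    (e : ℝ → ℝ) (t : ℝ) (ht : t ∈ Set.Icc (0 : ℝ) 1)
    (hl : Function.LeftInverse e (fun θ => t * γ θ + (1 - t) * θ))
    (hr : Function.RightInverse e (fun θ => t * γ θ + (1 - t) * θ))
    (g : ℝ → ℂ) (hg : Continuous g) (hgp : Function.Periodic g (2 * π)) :
    ∫ θ in (0 : ℝ)..(2 * π), g θ = ∫ φ in (0 : ℝ)..(2 * π), deriv e φ • g (e φ) := by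
  obtain ⟨ht0, ht1⟩ := ht
  have hF : ∀ x, HasDerivAt (fun θ => t * γ θ + (1 - t) * θ) (t * deriv γ x + (1 - t)) x := by
    intro x
    have h1 := ((hC1.differentiable (by norm_num)) x).hasDerivAt.const_mul t
    have h2 := (hasDerivAt_id x).const_mul (1 - t)
    have h3 := h1.add h2
    rw [mul_one] at h3
    exact h3
  have hFp : ∀ x, 0 < t * deriv γ x + (1 - t) := by
    intro x
    rcases ht0.eq_or_lt with h | h
    · rw [← h]; norm_num
    · have := mul_pos h (hpos x); linarith
  have hmono : StrictMono (fun θ => t * γ θ + (1 - t) * θ) :=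
    strictMono_of_deriv_pos (fun x => by rw [(hF x).deriv]; exact hFp x)
  have hem : Monotone e := by
    intro a b hab
    rw [← hmono.le_iff_le]
    have h1 := hr a
    have h2 := hr b
    simp only at h1 h2 ⊢
    rw [h1, h2]; exact hab
  have hec : Continuous e := hem.continuous_of_surjective hl.surjective
  have hed : ∀ x, HasDerivAt e (t * deriv γ (e x) + (1 - t))⁻¹ x := fun x =>
    HasDerivAt.of_local_left_inverse hec.continuousAt (hF (e x)) (hFp _).ne'
      (Filter.Eventually.of_forall hr)
  have hdc : Continuous (deriv e) := by
    have : deriv e = fun x => (t * deriv γ (e x) + (1 - t))⁻¹ := funext fun x => (hed x).deriv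
    rw [this]
    have hγ : Continuous (deriv γ) := hC1.continuous_deriv (by norm_num)
    exact Continuous.inv₀ (by fun_prop) (fun x => (hFp _).ne')
  have he2 : e (2 * π) = e 0 + 2 * π := by
    have h1 := hl (e 0 + 2 * π)
    have h2 := hr 0
    simp only at h1 h2
    rw [hper] at h1
    rw [← h1]; congr 1; linear_combination -h2
  have := intervalIntegral.integral_deriv_smul_comp (a := 0) (b := 2 * π) (f := e) (f' := deriv e)
    (g := g) (fun x _ => (hed x).differentiableAt.hasDerivAt) hdc.continuousOn hg
  simp only [Function.comp] at this
  rw [this, he2, hgp.intervalIntegral_add_eq (e 0) 0, zero_add]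

lemma aux_per (γ : ℝ → ℝ) (hper : ∀ θ : ℝ, γ (θ + 2 * π) = γ θ + 2 * π) (m n : ℤ) :
    Function.Periodic (fun θ : ℝ => Complex.exp (-Complex.I * m * θ) *
      Complex.exp (Complex.I * n * γ θ)) (2 * π) := by
  intro θ
  simp only [hper]
  rw [← Complex.exp_add, ← Complex.exp_add, Complex.exp_eq_exp_iff_exists_int]
  exact ⟨n - m, by push_cast; ring⟩

/-- The change-of-variables identity in the proof of Lemma 5.1: for `m < 0 < n`,
with `t = n/(|m|+n)`, `(1/2π)∫₀^{2π} e^{-imθ}e^{inγ(θ)} dθ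
= (1/2π)∫₀^{2π} e^{i(|m|+n)φ} η_t'(φ) dφ`; and symmetrically for `n < 0 < m`. -/
theorem stmt_6 (γ : ℝ → ℝ)
    (hC1 : ContDiff ℝ 1 γ) (hpos : ∀ θ : ℝ, 0 < deriv γ θ)
    (hper : ∀ θ : ℝ, γ (θ + 2 * π) = γ θ + 2 * π)
    (η : ℝ → ℝ → ℝ)
    (hη : ∀ t ∈ Set.Icc (0 : ℝ) 1,
      Function.LeftInverse (η t) (fun θ => t * γ θ + (1 - t) * θ) ∧
      Function.RightInverse (η t) (fun θ => t * γ θ + (1 - t) * θ)) :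
    (∀ m n : ℤ, m < 0 → 0 < n →
      (1 / (2 * π) : ℂ) *
          ∫ θ in (0 : ℝ)..(2 * π),
            Complex.exp (-Complex.I * m * θ) * Complex.exp (Complex.I * n * γ θ)
        = (1 / (2 * π) : ℂ) *
          ∫ φ in (0 : ℝ)..(2 * π),
            Complex.exp (Complex.I * (|(m : ℝ)| + (n : ℝ)) * φ) *
              Complex.ofReal (deriv (η ((n : ℝ) / (|(m : ℝ)| + (n : ℝ)))) φ))
    ∧ (∀ m n : ℤ, n < 0 → 0 < m →
      (1 / (2 * π) : ℂ) *
          ∫ θ in (0 : ℝ)..(2 * π),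
            Complex.exp (-Complex.I * m * θ) * Complex.exp (Complex.I * n * γ θ)
        = (1 / (2 * π) : ℂ) *
          ∫ φ in (0 : ℝ)..(2 * π),
            Complex.exp (-Complex.I * ((m : ℝ) + |(n : ℝ)|) * φ) *
              Complex.ofReal (deriv (η (|(n : ℝ)| / ((m : ℝ) + |(n : ℝ)|))) φ)) := by
  have hc : ∀ m n : ℤ, Continuous (fun θ : ℝ => Complex.exp (-Complex.I * m * θ) *
      Complex.exp (Complex.I * n * γ θ)) := by
    intro m n
    have := hC1.continuous
    fun_prop
  constructor
  · intro m n hm hn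
    have hm' : (m : ℝ) < 0 := by exact_mod_cast hm
    have hn' : (0 : ℝ) < n := by exact_mod_cast hn
    rw [abs_of_neg hm']
    have hs : 0 < -(m : ℝ) + n := by linarith
    have ht : (n : ℝ) / (-(m : ℝ) + n) ∈ Set.Icc (0 : ℝ) 1 :=
      ⟨by positivity, by rw [div_le_one hs]; linarith⟩
    obtain ⟨hl, hr⟩ := hη _ ht
    rw [aux_key γ hC1 hpos hper _ _ ht hl hr _ (hc m n) (aux_per γ hper m n)]
    congr 1
    refine intervalIntegral.integral_congr fun φ _ => ?_
    have h := hr φ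
    simp only at h ⊢
    generalize η ((n : ℝ) / (-(m : ℝ) + n)) = e at h ⊢
    have h' : (-(m : ℝ) + n) * φ = n * γ (e φ) - m * e φ := by
      have h1 : (n : ℝ) / (-(m : ℝ) + n) * (-(m : ℝ) + n) = n := div_mul_cancel₀ _ hs.ne'
      linear_combination (-(-(m : ℝ) + n)) * h + (γ (e φ) - e φ) * h1
    have h'' : (-(m : ℂ) + n) * φ = n * γ (e φ) - m * e φ := by exact_mod_cast h'
    rw [Complex.real_smul, mul_comm, ← Complex.exp_add]
    congr 2
    push_cast
    linear_combination -Complex.I * h''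
  · intro m n hn hm
    have hn' : (n : ℝ) < 0 := by exact_mod_cast hn
    have hm' : (0 : ℝ) < m := by exact_mod_cast hm
    rw [abs_of_neg hn']
    have hs : 0 < (m : ℝ) + -n := by linarith
    have ht : -(n : ℝ) / ((m : ℝ) + -n) ∈ Set.Icc (0 : ℝ) 1 :=
      ⟨div_nonneg (by linarith) hs.le, by rw [div_le_one hs]; linarith⟩
    obtain ⟨hl, hr⟩ := hη _ ht
    rw [aux_key γ hC1 hpos hper _ _ ht hl hr _ (hc m n) (aux_per γ hper m n)]
    congr 1
    refine intervalIntegral.integral_congr fun φ _ => ?_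
    have h := hr φ
    simp only at h ⊢
    generalize η (-(n : ℝ) / ((m : ℝ) + -n)) = e at h ⊢
    have h' : ((m : ℝ) + -n) * φ = -n * γ (e φ) + m * e φ := by
      have hs' := hs.ne'
      have h1 : -(n : ℝ) / ((m : ℝ) + -n) * ((m : ℝ) + -n) = -n := div_mul_cancel₀ _ hs'
      linear_combination (-((m : ℝ) + -n)) * h + (γ (e φ) - e φ) * h1
    have h'' : ((m : ℂ) + -n) * φ = -n * γ (e φ) + m * e φ := by exact_mod_cast h'
    rw [Complex.real_smul, mul_comm, ← Complex.exp_add]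
    congr 2
    push_cast
    linear_combination Complex.I * h''
end

section
/- Let h : ℝ → ℝ be a smooth function with h(t) = 1 for t ≤ 1 and h(t) = 0 for t ≥ 2, and define g_n : ℝ → ℝ by g_n(θ) = (1+cos θ)·h(tan(θ/2)/n) for θ ∈ (−π, π). Then each g_n is infinitely differentiable on (−π, π), and there exists a constant M such that for all n ≥ 1, ∫_{−π}^{π} |g_n'''(θ)| dθ ≤ M, where g_n''' denotes the third derivative of g_n on (−π, π). -/
open scoped Real

lemma aux_u (n : ℝ) (θ : ℝ) (hθ : θ ∈ Set.Ioo (-π) π) :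
    HasDerivAt (fun θ : ℝ => Real.tan (θ / 2) / n) ((1 + Real.tan (θ / 2) ^ 2) / 2 / n) θ := by
  have hc : Real.cos (θ / 2) ≠ 0 :=
    (Real.cos_pos_of_mem_Ioo ⟨by linarith [hθ.1], by linarith [hθ.2]⟩).ne'
  have := ((Real.hasDerivAt_tan hc).comp θ ((hasDerivAt_id θ).div_const 2)).div_const n
  refine this.congr_deriv ?_
  have h1 : 1 + Real.tan (θ / 2) ^ 2 = 1 / Real.cos (θ / 2) ^ 2 := by
    rw [Real.tan_eq_sin_div_cos]
    field_simp
    linarith [Real.sin_sq_add_cos_sq (θ / 2)]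
  rw [h1]; ring

lemma aux_trig (θ : ℝ) (hθ : θ ∈ Set.Ioo (-π) π) :
    (1 + Real.cos θ) * (1 + Real.tan (θ / 2) ^ 2) = 2 ∧
    Real.sin θ * (1 + Real.tan (θ / 2) ^ 2) = 2 * Real.tan (θ / 2) := by
  have hc : Real.cos (θ / 2) ≠ 0 :=
    (Real.cos_pos_of_mem_Ioo ⟨by linarith [hθ.1], by linarith [hθ.2]⟩).ne'
  have h1 : 1 + Real.tan (θ / 2) ^ 2 = 1 / Real.cos (θ / 2) ^ 2 := by
    rw [Real.tan_eq_sin_div_cos]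
    field_simp
    linarith [Real.sin_sq_add_cos_sq (θ / 2)]
  have h2 : Real.cos θ = 2 * Real.cos (θ / 2) ^ 2 - 1 := by
    rw [← Real.cos_two_mul]; ring_nf
  have h3 : Real.sin θ = 2 * Real.sin (θ / 2) * Real.cos (θ / 2) := by
    rw [← Real.sin_two_mul]; ring_nf
  rw [h1, h2, h3, Real.tan_eq_sin_div_cos]
  constructor <;> field_simp
  ring

lemma aux_d3 (h k1 k2 k3 : ℝ → ℝ) (H0 : ∀ x, HasDerivAt h (k1 x) x)
    (H1 : ∀ x, HasDerivAt k1 (k2 x) x) (H2 : ∀ x, HasDerivAt k2 (k3 x) x)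
    (n : ℝ) (hn : n ≠ 0) (θ : ℝ) (hθ : θ ∈ Set.Ioo (-π) π) :
    iteratedDeriv 3 (fun θ : ℝ => (1 + Real.cos θ) * h (Real.tan (θ / 2) / n)) θ =
      Real.sin θ * h (Real.tan (θ / 2) / n) + ((1 + Real.tan (θ / 2) ^ 2) / 2 / n) *
        (-(Real.cos θ + 1) * k1 (Real.tan (θ / 2) / n) +
          (1 / n ^ 2 + (Real.tan (θ / 2) / n) ^ 2) / 2 * k3 (Real.tan (θ / 2) / n)) := by
  have A1 : ∀ x ∈ Set.Ioo (-π) π,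
      deriv (fun θ : ℝ => (1 + Real.cos θ) * h (Real.tan (θ / 2) / n)) x =
      -Real.sin x * h (Real.tan (x / 2) / n) + k1 (Real.tan (x / 2) / n) / n := by
    intro x hx
    have hu := aux_u n x hx
    obtain ⟨t1, t2⟩ := aux_trig x hx
    have := ((Real.hasDerivAt_cos x).const_add 1).mul ((H0 _).comp x hu)
    refine this.deriv.trans ?_
    simp only [Function.comp]
    linear_combination (k1 (Real.tan (x / 2) / n) / (2 * n)) * t1
  have A2 : ∀ x ∈ Set.Ioo (-π) π,
      deriv (fun x : ℝ => -Real.sin x * h (Real.tan (x / 2) / n) +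
        k1 (Real.tan (x / 2) / n) / n) x =
      -Real.cos x * h (Real.tan (x / 2) / n)
        - (Real.tan (x / 2) / n) * k1 (Real.tan (x / 2) / n)
        + (1 / n ^ 2 + (Real.tan (x / 2) / n) ^ 2) / 2 * k2 (Real.tan (x / 2) / n) := by
    intro x hx
    have hu := aux_u n x hx
    obtain ⟨t1, t2⟩ := aux_trig x hx
    have := ((Real.hasDerivAt_sin x).neg.mul ((H0 _).comp x hu)).add
      (((H1 _).comp x hu).div_const n)
    refine this.deriv.trans ?_
    simp only [Function.comp, Pi.neg_apply]
    linear_combination (-k1 (Real.tan (x / 2) / n) / (2 * n)) * t2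
  have A3 : ∀ x ∈ Set.Ioo (-π) π,
      deriv (fun x : ℝ => -Real.cos x * h (Real.tan (x / 2) / n)
        - (Real.tan (x / 2) / n) * k1 (Real.tan (x / 2) / n)
        + (1 / n ^ 2 + (Real.tan (x / 2) / n) ^ 2) / 2 * k2 (Real.tan (x / 2) / n)) x =
      Real.sin x * h (Real.tan (x / 2) / n) + ((1 + Real.tan (x / 2) ^ 2) / 2 / n) *
        (-(Real.cos x + 1) * k1 (Real.tan (x / 2) / n) +
          (1 / n ^ 2 + (Real.tan (x / 2) / n) ^ 2) / 2 * k3 (Real.tan (x / 2) / n)) := by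
    intro x hx
    have hu := aux_u n x hx
    have := (((Real.hasDerivAt_cos x).neg.mul ((H0 _).comp x hu)).sub
      (hu.mul ((H1 _).comp x hu))).add
      ((((hu.pow 2).const_add (1 / n ^ 2)).div_const 2).mul ((H2 _).comp x hu))
    refine this.deriv.trans ?_
    simp only [Function.comp, Pi.neg_apply, Pi.pow_apply]
    push_cast
    ring
  have ev : ∀ x ∈ Set.Ioo (-π) π, ∀ᶠ y in nhds x, y ∈ Set.Ioo (-π) π :=
    fun x hx => isOpen_Ioo.mem_nhds hx
  have B2 : ∀ x ∈ Set.Ioo (-π) π,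
      deriv (deriv (fun θ : ℝ => (1 + Real.cos θ) * h (Real.tan (θ / 2) / n))) x = _ :=
    fun x hx => (Filter.EventuallyEq.deriv_eq ((ev x hx).mono A1)).trans (A2 x hx)
  rw [iteratedDeriv_succ, iteratedDeriv_succ, iteratedDeriv_one]
  exact (Filter.EventuallyEq.deriv_eq ((ev θ hθ).mono B2)).trans (A3 θ hθ)

/-- Each cut-off field `g_n(θ) = (1+cos θ)·h(tan(θ/2)/n)` is smooth on `(-π,π)`, and
the `L¹((-π,π))` norms of the third derivatives are uniformly bounded in `n`. -/
theorem stmt_9 (h : ℝ → ℝ) (hsm : ContDiff ℝ (⊤ : ℕ∞) h)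
    (h1 : ∀ t : ℝ, t ≤ 1 → h t = 1) (h2 : ∀ t : ℝ, 2 ≤ t → h t = 0) :
    (∀ n : ℕ, 1 ≤ n →
      ContDiffOn ℝ (⊤ : ℕ∞) (fun θ : ℝ => (1 + Real.cos θ) * h (Real.tan (θ / 2) / n))
        (Set.Ioo (-π) π))
    ∧ ∃ M : ℝ, ∀ n : ℕ, 1 ≤ n →
        (∫ θ in (-π)..π,
          |iteratedDeriv 3 (fun θ : ℝ => (1 + Real.cos θ) * h (Real.tan (θ / 2) / n)) θ|)
          ≤ M := by
  constructor
  · intro n _ θ hθ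
    have hc : Real.cos (θ / 2) ≠ 0 :=
      (Real.cos_pos_of_mem_Ioo ⟨by linarith [hθ.1], by linarith [hθ.2]⟩).ne'
    have ht : ContDiffAt ℝ (⊤ : ℕ∞) (fun θ : ℝ => Real.tan (θ / 2) / n) θ :=
      ((Real.contDiffAt_tan.2 hc).comp θ (contDiffAt_id.div_const 2)).div_const _
    exact (((contDiffAt_const.add Real.contDiff_cos.contDiffAt).mul
      (hsm.contDiffAt.comp θ ht))).contDiffWithinAt
  have Hd : ∀ m : ℕ, ∀ x, HasDerivAt (iteratedDeriv m h) (iteratedDeriv (m + 1) h x) x := by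
    intro m x
    rw [iteratedDeriv_succ]
    exact ((hsm.differentiable_iteratedDeriv m (by exact_mod_cast WithTop.coe_lt_top m)) x).hasDerivAt
  have H0 : ∀ x, HasDerivAt h (iteratedDeriv 1 h x) x := by
    simpa using Hd 0
  have Hc : ∀ m : ℕ, Continuous (iteratedDeriv m h) := fun m =>
    continuous_iff_continuousAt.2 fun x => (Hd m x).continuousAt
  have Z1 : ∀ m : ℕ, 0 < m → ∀ x < 1, iteratedDeriv m h x = 0 := by
    intro m hm x hx
    have : h =ᶠ[nhds x] fun _ => (1 : ℝ) :=
      (isOpen_Iio.mem_nhds hx : Set.Iio 1 ∈ nhds x) |> Filter.mem_of_superset <| fun y hy => h1 y (le_of_lt hy)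
    rw [this.iteratedDeriv_eq]
    simp [iteratedDeriv_const, hm.ne']
  have Z2 : ∀ m : ℕ, ∀ x > 2, iteratedDeriv m h x = 0 := by
    intro m x hx
    have : h =ᶠ[nhds x] fun _ => (0 : ℝ) :=
      (isOpen_Ioi.mem_nhds hx : Set.Ioi 2 ∈ nhds x) |> Filter.mem_of_superset <| fun y hy => h2 y (le_of_lt hy)
    rw [this.iteratedDeriv_eq]
    simp [iteratedDeriv_const]
  obtain ⟨C0, hC0⟩ := isCompact_Icc.exists_bound_of_continuousOn
    (s := Set.Icc (1 / 2 : ℝ) 3) (hsm.continuous.continuousOn)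
  obtain ⟨C1, hC1⟩ := isCompact_Icc.exists_bound_of_continuousOn
    (s := Set.Icc (1 / 2 : ℝ) 3) ((Hc 1).continuousOn)
  obtain ⟨C3, hC3⟩ := isCompact_Icc.exists_bound_of_continuousOn
    (s := Set.Icc (1 / 2 : ℝ) 3) ((Hc 3).continuousOn)
  have P0 : 0 ≤ C0 := (norm_nonneg _).trans (hC0 1 (by norm_num))
  have P1 : 0 ≤ C1 := (norm_nonneg _).trans (hC1 1 (by norm_num))
  have P3 : 0 ≤ C3 := (norm_nonneg _).trans (hC3 1 (by norm_num))
  have hπ := Real.pi_pos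
  refine ⟨2 * π + (C0 * (2 * π) + (2 * C1 + 5 * C3) * (5 / 2)), fun n hn => ?_⟩
  have hn1 : (1 : ℝ) ≤ n := by exact_mod_cast hn
  have hn0 : (0 : ℝ) < n := by linarith
  have D3 := aux_d3 h _ _ _ H0 (Hd 1) (Hd 2) n hn0.ne'
  set F : ℝ → ℝ := iteratedDeriv 3 (fun θ : ℝ => (1 + Real.cos θ) * h (Real.tan (θ / 2) / n))
    with hF
  set a := 2 * Real.arctan (n / 2) with ha
  set b := 2 * Real.arctan (3 * n) with hb
  have ha1 : -π < a := by linarith [Real.neg_pi_div_two_lt_arctan (n / 2 : ℝ)]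
  have hb1 : b < π := by linarith [Real.arctan_lt_pi_div_two (3 * n : ℝ)]
  have hab : a < b := by
    have := Real.arctan_strictMono (show (n / 2 : ℝ) < 3 * n by linarith)
    linarith
  have ta : Real.tan (a / 2) = n / 2 := by
    rw [ha, mul_div_cancel_left₀ _ two_ne_zero, Real.tan_arctan]
  have tb : Real.tan (b / 2) = 3 * n := by
    rw [hb, mul_div_cancel_left₀ _ two_ne_zero, Real.tan_arctan]
  have mono : ∀ x y : ℝ, -π < x → x ≤ y → y < π → Real.tan (x / 2) ≤ Real.tan (y / 2) := by
    intro x y hx hxy hy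
    exact Real.strictMonoOn_tan.monotoneOn ⟨by linarith, by linarith⟩
      ⟨by linarith, by linarith⟩ (by linarith)
  by_cases hint : IntervalIntegrable (fun θ => |F θ|) MeasureTheory.volume (-π) π
  swap
  · rw [intervalIntegral.integral_undef hint]; positivity
  have sub : ∀ x y, x ∈ Set.Icc (-π) π → y ∈ Set.Icc (-π) π →
      IntervalIntegrable (fun θ => |F θ|) MeasureTheory.volume x y := by
    intro x y hx hy
    apply hint.mono_set
    rw [Set.uIcc_of_le (by linarith : -π ≤ π)]
    exact Set.uIcc_subset_Icc hx hy
  have mπ : -π ∈ Set.Icc (-π) π := ⟨le_rfl, by linarith⟩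
  have pπ : π ∈ Set.Icc (-π) π := ⟨by linarith, le_rfl⟩
  have aπ : a ∈ Set.Icc (-π) π := ⟨by linarith, by linarith⟩
  have bπ : b ∈ Set.Icc (-π) π := ⟨by linarith, by linarith⟩
  have s1 := intervalIntegral.integral_add_adjacent_intervals (sub _ _ mπ aπ) (sub _ _ aπ bπ)
  have s2 := intervalIntegral.integral_add_adjacent_intervals (sub _ _ mπ bπ) (sub _ _ bπ pπ)
  rw [← s2, ← s1]
  have I1 : (∫ θ in (-π)..a, |F θ|) ≤ 2 * π := by
    have : ‖∫ θ in (-π)..a, |F θ|‖ ≤ 1 * |a - -π| := by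
      apply intervalIntegral.norm_integral_le_of_norm_le_const
      intro x hx
      rw [Set.uIoc_of_le ha1.le] at hx
      have hx' : x ∈ Set.Ioo (-π) π := ⟨hx.1, by linarith [hx.2]⟩
      have hu : Real.tan (x / 2) / n ≤ 1 / 2 := by
        rw [div_le_iff₀ hn0]
        have := mono x a hx.1 hx.2 (by linarith)
        linarith
      rw [D3 x hx', h1 _ (by linarith), Z1 1 one_pos _ (by linarith),
        Z1 3 (by norm_num) _ (by linarith)]
      simpa using Real.abs_sin_le_one x
    rw [abs_of_nonneg (by linarith)] at this
    have := (le_abs_self _).trans this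
    linarith
  have I3 : (∫ θ in b..π, |F θ|) ≤ 0 := by
    have : ‖∫ θ in b..π, |F θ|‖ ≤ 0 * |π - b| := by
      apply intervalIntegral.norm_integral_le_of_norm_le_const_ae
      have hne : ∀ᵐ x : ℝ, x ≠ π := by
        simp [MeasureTheory.ae_iff]
      filter_upwards [hne] with x hxπ hx
      rw [Set.uIoc_of_le hb1.le] at hx
      have hx' : x ∈ Set.Ioo (-π) π := ⟨by linarith [hx.1], lt_of_le_of_ne hx.2 hxπ⟩
      have hu : 3 ≤ Real.tan (x / 2) / n := by
        rw [le_div_iff₀ hn0]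
        have := mono b x (by linarith) hx.1.le hx'.2
        linarith
      rw [D3 x hx', h2 _ (by linarith), Z2 1 _ (by linarith),
        Z2 3 _ (by linarith)]
      simp
    rw [zero_mul] at this
    exact (le_abs_self _).trans this
  have I2 : (∫ θ in a..b, |F θ|) ≤ C0 * (2 * π) + (2 * C1 + 5 * C3) * (5 / 2) := by
    have hder : ∀ x ∈ Set.uIcc a b, HasDerivAt
        (fun θ : ℝ => C0 * θ + (2 * C1 + 5 * C3) * (Real.tan (θ / 2) / n))
        (C0 + (2 * C1 + 5 * C3) * ((1 + Real.tan (x / 2) ^ 2) / 2 / n)) x := by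
      intro x hx
      rw [Set.uIcc_of_le hab.le] at hx
      have hu := aux_u n x ⟨by linarith [hx.1], by linarith [hx.2]⟩
      exact (((hasDerivAt_id x).const_mul C0).add (hu.const_mul (2 * C1 + 5 * C3))).congr_deriv
        (by ring)
    have hii : IntervalIntegrable
        (fun x : ℝ => C0 + (2 * C1 + 5 * C3) * ((1 + Real.tan (x / 2) ^ 2) / 2 / n))
        MeasureTheory.volume a b := by
      apply ContinuousOn.intervalIntegrable
      intro x hx
      rw [Set.uIcc_of_le hab.le] at hx
      have hc : Real.cos (x / 2) ≠ 0 :=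
        (Real.cos_pos_of_mem_Ioo ⟨by linarith [hx.1], by linarith [hx.2]⟩).ne'
      have ht : ContinuousAt (fun x : ℝ => Real.tan (x / 2)) x :=
        ContinuousAt.comp (f := fun x : ℝ => x / 2) (Real.continuousAt_tan.2 hc) (by fun_prop)
      exact ContinuousAt.continuousWithinAt (by fun_prop)
    have hle : (∫ θ in a..b, |F θ|) ≤ ∫ x in a..b,
        (C0 + (2 * C1 + 5 * C3) * ((1 + Real.tan (x / 2) ^ 2) / 2 / n)) := by
      apply intervalIntegral.integral_mono_on hab.le (sub _ _ aπ bπ) hii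
      intro x hx
      have hx' : x ∈ Set.Ioo (-π) π := ⟨by linarith [hx.1], by linarith [hx.2]⟩
      have hu : Real.tan (x / 2) / n ∈ Set.Icc (1 / 2 : ℝ) 3 := by
        constructor
        · rw [le_div_iff₀ hn0]
          have := mono a x ha1 hx.1 hx'.2
          linarith
        · rw [div_le_iff₀ hn0]
          have := mono x b hx'.1 hx.2 hb1
          linarith
      rw [D3 x hx']
      set u := Real.tan (x / 2) / n
      have e0 := hC0 u hu
      have e1 := hC1 u hu
      have e3 := hC3 u hu
      rw [Real.norm_eq_abs] at e0 e1 e3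
      have hw : 0 ≤ (1 + Real.tan (x / 2) ^ 2) / 2 / (n : ℝ) := by positivity
      have hq : |(1 / (n : ℝ) ^ 2 + u ^ 2) / 2| ≤ 5 := by
        rw [abs_of_nonneg (by positivity)]
        have : 1 / (n : ℝ) ^ 2 ≤ 1 := by
          rw [div_le_one (by positivity)]; nlinarith
        nlinarith [hu.1, hu.2]
      have hcs : |-(Real.cos x + 1)| ≤ 2 := by
        rw [abs_le]; constructor <;> linarith [Real.cos_le_one x, Real.neg_one_le_cos x]
      refine (abs_add_le _ _).trans (add_le_add ?_ ?_)
      · rw [abs_mul]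
        calc _ ≤ 1 * C0 := mul_le_mul (Real.abs_sin_le_one x) e0 (abs_nonneg _) zero_le_one
          _ = C0 := one_mul _
      · rw [abs_mul, abs_of_nonneg hw, mul_comm]
        refine mul_le_mul_of_nonneg_right ?_ hw
        refine (abs_add_le _ _).trans (add_le_add ?_ ?_)
        · rw [abs_mul]; exact mul_le_mul hcs e1 (abs_nonneg _) (by norm_num)
        · rw [abs_mul]; exact mul_le_mul hq e3 (abs_nonneg _) (by norm_num)
    rw [intervalIntegral.integral_eq_sub_of_hasDerivAt hder hii, ta, tb] at hle
    have q1 : (n / 2 / n : ℝ) = 1 / 2 := by field_simp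
    have q2 : (3 * n / n : ℝ) = 3 := by field_simp
    rw [q1, q2] at hle
    nlinarith [mul_le_mul_of_nonneg_left (show b - a ≤ 2 * π by linarith) P0]
  linarith
end

section
/- Let n ≥ 0 and let f₁, f₂ : ℝ → ℝ be smooth 2π-periodic functions with f₁(π) = f₂(π) = 0, f₁'(π) = f₂'(π) = 0, and f₁^{(k)}(π) = f₂^{(k)}(π) for all 0 ≤ k ≤ n. Suppose φ₁, φ₂ : ℝ × ℝ → ℝ are smooth maps satisfying ∂_t φ_j(t,θ) = f_j(φ_j(t,θ)) and φ_j(0,θ) = θ for all t, θ (j = 1,2). Then φ₁(t,π) = φ₂(t,π) = π for all t, and for every t ∈ ℝ and every 0 ≤ k ≤ n, ∂_θ^k φ₁(t,θ)|_{θ=π} = ∂_θ^k φ₂(t,θ)|_{θ=π}. -/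
open scoped Real

theorem aux_taylor_zero (h : ℝ → ℝ) (a : ℝ) (m : ℕ)
    (hz : ∀ k, k ≤ m → iteratedDeriv k h a = 0) (x : ℝ) :
    taylorWithinEval h m Set.univ a x = 0 := by
  induction m with
  | zero => simpa using hz 0 le_rfl
  | succ m ih =>
    rw [taylorWithinEval_succ, ih (fun k hk => hz k (by omega)), iteratedDerivWithin_univ,
      hz _ le_rfl]
    simp

theorem aux_littleO (h : ℝ → ℝ) (hh : ContDiff ℝ (⊤ : ℕ∞) h) (a : ℝ) (m : ℕ)
    (hz : ∀ k, k ≤ m → iteratedDeriv k h a = 0) :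
    h =o[nhds a] fun x => (x - a) ^ m := by
  have := taylor_isLittleO_univ (x₀ := a) (n := m) (hh.of_le (by exact_mod_cast le_top))
  simpa [aux_taylor_zero h a m hz] using this

theorem aux_const (c a : ℝ) (m : ℕ)
    (h : (fun x => c * (x - a) ^ m) =o[nhds a] fun x => (x - a) ^ m) : c = 0 := by
  by_contra hc
  have h1 := h.mono (nhdsWithin_le_nhds (s := {a}ᶜ))
  have h2 : (fun x => (x - a) ^ m) =o[nhdsWithin a {a}ᶜ] fun x => (x - a) ^ m :=
    (Asymptotics.isLittleO_const_mul_left_iff hc).1 h1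
  refine Asymptotics.isLittleO_irrefl ?_ h2
  apply Filter.Eventually.frequently
  filter_upwards [self_mem_nhdsWithin] with x hx
  exact pow_ne_zero _ (sub_ne_zero.2 hx)

theorem aux_conv (h : ℝ → ℝ) (hh : ContDiff ℝ (⊤ : ℕ∞) h) (a : ℝ) (n : ℕ)
    (ho : h =o[nhds a] fun x => (x - a) ^ n) (k : ℕ) (hk : k ≤ n) :
    iteratedDeriv k h a = 0 := by
  induction k using Nat.strong_induction_on with
  | _ k ih =>
  have hbig : (fun x : ℝ => (x - a) ^ n) =O[nhds a] fun x => (x - a) ^ k := by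
    have : (fun x : ℝ => (x - a) ^ n) = fun x => (x - a) ^ (n - k) * (x - a) ^ k := by
      funext x; rw [← pow_add]; congr 1; omega
    rw [this]
    have hc : (fun x : ℝ => (x - a) ^ (n - k)) =O[nhds a] fun _ => (1 : ℝ) :=
      ((by fun_prop : Continuous fun x : ℝ => (x - a) ^ (n - k)).tendsto a).isBigO_one ℝ
    simpa using hc.mul (Asymptotics.isBigO_refl (fun x : ℝ => (x - a) ^ k) (nhds a))
  have h1 := ho.trans_isBigO hbig
  have h2 := h1.sub
    (taylor_isLittleO_univ (f := h) (x₀ := a) (n := k) (hh.of_le (by exact_mod_cast le_top)))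
  simp only [sub_sub_cancel] at h2
  rcases k with _ | k
  · simp only [taylor_within_zero_eval] at h2
    simpa using aux_const (h a) a 0 (by simpa using h2)
  · have h3 : ∀ x, taylorWithinEval h (k + 1) Set.univ a x =
        (((k + 1 : ℝ) * k.factorial)⁻¹ * iteratedDeriv (k + 1) h a) * (x - a) ^ (k + 1) := by
      intro x
      rw [taylorWithinEval_succ, aux_taylor_zero h a k (fun j hj => ih j (by omega) (by omega)),
        iteratedDerivWithin_univ]
      simp only [smul_eq_mul]; ring
    simp only [h3] at h2
    have h4 := aux_const _ _ _ h2
    have h5 : ((k + 1 : ℝ) * k.factorial)⁻¹ ≠ 0 := by positivity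
    exact (mul_eq_zero.1 h4).resolve_left h5

theorem aux_lip (f : ℝ → ℝ) (hf : ContDiff ℝ (⊤ : ℕ∞) f) (c : ℝ) (hc : c ≠ 0)
    (hp : ∀ θ, f (θ + c) = f θ) : ∃ L : NNReal, LipschitzWith L f := by
  have hper : Function.Periodic (deriv f) c := by
    intro x
    have : (fun y => f (y + c)) = f := funext hp
    rw [← deriv_comp_add_const, this]
  have hcont : Continuous (deriv f) := hf.continuous_deriv (by exact_mod_cast le_top)
  obtain ⟨C, hC⟩ := (hper.isBounded_of_continuous hc hcont).exists_norm_le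
  refine ⟨C.toNNReal, lipschitzWith_of_nnnorm_deriv_le (hf.differentiable (by simp)) ?_⟩
  intro x
  rw [← NNReal.coe_le_coe]
  exact (hC _ ⟨x, rfl⟩).trans (Real.le_coe_toNNReal C)

theorem aux_gb (L ε t : ℝ) : gronwallBound 0 L ε t = ε * gronwallBound 0 L 1 t := by
  unfold gronwallBound
  split_ifs <;> ring

theorem aux_growth (f : ℝ → ℝ) (L : NNReal) (hL : LipschitzWith L f) (a : ℝ) (ha : f a = 0)
    (u : ℝ → ℝ) (hu : ∀ t, HasDerivAt u (f (u t)) t) (T t : ℝ) (ht : t ∈ Set.Icc 0 T) :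
    |u t - a| ≤ |u 0 - a| * Real.exp (L * T) := by
  have := dist_le_of_trajectories_ODE (v := fun _ => f) (K := L) (f := u) (g := fun _ => a)
    (a := 0) (b := T) (δ := |u 0 - a|) (fun _ => hL)
    (fun s _ => (hu s).continuousAt.continuousWithinAt) (fun s _ => (hu s).hasDerivWithinAt)
    continuousOn_const (fun s _ => by simpa [ha] using hasDerivWithinAt_const s _ a)
    (by simp [Real.dist_eq]) t ht
  rw [Real.dist_eq] at this
  refine this.trans ?_
  have := ht.2
  gcongr
  linarith

theorem aux_main (n : ℕ) (f₁ f₂ : ℝ → ℝ) (a : ℝ)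
    (hf₁ : ContDiff ℝ (⊤ : ℕ∞) f₁) (hf₂ : ContDiff ℝ (⊤ : ℕ∞) f₂) (L₁ L₂ : NNReal)
    (hL₁ : LipschitzWith L₁ f₁) (hL₂ : LipschitzWith L₂ f₂) (hv₂ : f₂ a = 0)
    (hjets : ∀ k : ℕ, k ≤ n → iteratedDeriv k f₁ a = iteratedDeriv k f₂ a)
    (φ₁ φ₂ : ℝ → ℝ → ℝ)
    (hflow₁ : ∀ t θ : ℝ, HasDerivAt (fun s => φ₁ s θ) (f₁ (φ₁ t θ)) t)
    (hflow₂ : ∀ t θ : ℝ, HasDerivAt (fun s => φ₂ s θ) (f₂ (φ₂ t θ)) t)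
    (hinit₁ : ∀ θ : ℝ, φ₁ 0 θ = θ) (hinit₂ : ∀ θ : ℝ, φ₂ 0 θ = θ) (T : ℝ) (hT : 0 ≤ T) :
    (fun θ => φ₁ T θ - φ₂ T θ) =o[nhds a] fun θ => (θ - a) ^ n := by
  have ho : (f₁ - f₂) =o[nhds a] fun x => (x - a) ^ n := by
    refine aux_littleO (f₁ - f₂) (hf₁.sub hf₂) a n fun k hk => ?_
    rw [iteratedDeriv_sub (hf₁.of_le (by exact_mod_cast le_top)).contDiffAt
      (hf₂.of_le (by exact_mod_cast le_top)).contDiffAt, hjets k hk, sub_self]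
  set M := Real.exp (L₂ * T) with hM
  have hMpos : 0 < M := Real.exp_pos _
  set G := gronwallBound 0 L₁ 1 T with hG
  have hG0 : 0 ≤ G := by
    have := gronwallBound_mono (δ := 0) (K := L₁) (ε := 1) le_rfl zero_le_one L₁.2 hT
    rwa [gronwallBound_x0] at this
  rw [Asymptotics.isLittleO_iff]
  intro ε hε
  set c := ε / (M ^ n * (G + 1)) with hc
  have hcpos : 0 < c := by positivity
  obtain ⟨δ, hδ, hb⟩ := Metric.eventually_nhds_iff.1 (Asymptotics.isLittleO_iff.1 ho hcpos)
  rw [Metric.eventually_nhds_iff]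
  refine ⟨δ / M, by positivity, fun θ hθ => ?_⟩
  rw [Real.dist_eq, lt_div_iff₀ hMpos] at hθ
  have key := dist_le_of_approx_trajectories_ODE (v := fun _ => f₁) (K := L₁)
    (f := fun s => φ₁ s θ) (g := fun s => φ₂ s θ) (a := 0) (b := T) (δ := 0) (εf := 0)
    (εg := c * (M ^ n * |θ - a| ^ n)) (fun _ => hL₁)
    (fun s _ => (hflow₁ s θ).continuousAt.continuousWithinAt)
    (fun s _ => (hflow₁ s θ).hasDerivWithinAt) (fun s _ => by simp)
    (fun s _ => (hflow₂ s θ).continuousAt.continuousWithinAt)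
    (fun s _ => (hflow₂ s θ).hasDerivWithinAt)
    (fun s hs => by
      have hg := aux_growth f₂ L₂ hL₂ a hv₂ (fun s => φ₂ s θ) (fun s => hflow₂ s θ) T s
        ⟨hs.1, hs.2.le⟩
      simp only [hinit₂] at hg
      rw [← hM] at hg
      have h1 := hb (y := φ₂ s θ) (by rw [Real.dist_eq]; linarith)
      rw [dist_comm, Real.dist_eq]
      simp only [Pi.sub_apply, Real.norm_eq_abs, abs_pow] at h1
      refine h1.trans ?_
      rw [← mul_pow, mul_comm M]
      gcongr)
    (by simp [hinit₁, hinit₂]) T ⟨hT, le_rfl⟩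
  rw [aux_gb, zero_add, sub_zero, ← hG, Real.dist_eq] at key
  rw [Real.norm_eq_abs, norm_pow, Real.norm_eq_abs]
  refine key.trans ?_
  have e : c * (M ^ n * |θ - a| ^ n) * G = ε * |θ - a| ^ n * (G / (G + 1)) := by
    rw [hc]; field_simp
  rw [e]
  refine mul_le_of_le_one_right (by positivity) ?_
  rw [div_le_one (by positivity)]
  linarith

/-- Lemma A.1 (first part): flows of two `2π`-periodic vector fields vanishing with their
first derivative at `π`, whose derivatives at `π` agree up to order `n`, fix `π` and have
equal `θ`-derivatives at `π` up to order `n`, for all times `t`. -/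
theorem stmt_12 (n : ℕ) (f₁ f₂ : ℝ → ℝ)
    (hf₁ : ContDiff ℝ (⊤ : ℕ∞) f₁) (hf₂ : ContDiff ℝ (⊤ : ℕ∞) f₂)
    (hf₁per : ∀ θ : ℝ, f₁ (θ + 2 * π) = f₁ θ) (hf₂per : ∀ θ : ℝ, f₂ (θ + 2 * π) = f₂ θ)
    (hv₁ : f₁ π = 0) (hv₂ : f₂ π = 0)
    (hd₁ : deriv f₁ π = 0) (hd₂ : deriv f₂ π = 0)
    (hjets : ∀ k : ℕ, k ≤ n → iteratedDeriv k f₁ π = iteratedDeriv k f₂ π)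
    (φ₁ φ₂ : ℝ → ℝ → ℝ)
    (hφ₁sm : ContDiff ℝ (⊤ : ℕ∞) (Function.uncurry φ₁)) (hφ₂sm : ContDiff ℝ (⊤ : ℕ∞) (Function.uncurry φ₂))
    (hflow₁ : ∀ t θ : ℝ, HasDerivAt (fun s => φ₁ s θ) (f₁ (φ₁ t θ)) t)
    (hflow₂ : ∀ t θ : ℝ, HasDerivAt (fun s => φ₂ s θ) (f₂ (φ₂ t θ)) t)
    (hinit₁ : ∀ θ : ℝ, φ₁ 0 θ = θ) (hinit₂ : ∀ θ : ℝ, φ₂ 0 θ = θ) :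
    (∀ t : ℝ, φ₁ t π = π ∧ φ₂ t π = π)
    ∧ ∀ t : ℝ, ∀ k : ℕ, k ≤ n →
        iteratedDeriv k (φ₁ t) π = iteratedDeriv k (φ₂ t) π := by
  obtain ⟨L₁, hL₁⟩ := aux_lip f₁ hf₁ (2 * π) (by positivity) hf₁per
  obtain ⟨L₂, hL₂⟩ := aux_lip f₂ hf₂ (2 * π) (by positivity) hf₂per
  have hrev : ∀ (f : ℝ → ℝ) (φ : ℝ → ℝ → ℝ),
      (∀ t θ : ℝ, HasDerivAt (fun s => φ s θ) (f (φ t θ)) t) →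
      ∀ t θ : ℝ, HasDerivAt (fun s => φ (-s) θ) ((-f) (φ (-t) θ)) t := by
    intro f φ h t θ
    have := (h (-t) θ).comp t (hasDerivAt_neg t)
    simpa [Function.comp_def] using this
  have hfix : ∀ (f : ℝ → ℝ) (L : NNReal) (φ : ℝ → ℝ → ℝ), LipschitzWith L f → f π = 0 →
      (∀ t θ : ℝ, HasDerivAt (fun s => φ s θ) (f (φ t θ)) t) → (∀ θ, φ 0 θ = θ) →
      ∀ t, φ t π = π := by
    intro f L φ hL hv h h0 t
    rcases le_total 0 t with ht | ht
    · have := aux_growth f L hL π hv (fun s => φ s π) (fun s => h s π) t t ⟨ht, le_rfl⟩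
      simp only [h0, sub_self, abs_zero, zero_mul] at this
      exact sub_eq_zero.1 (abs_nonpos_iff.1 this)
    · have := aux_growth (-f) L hL.neg π (by simp [hv]) (fun s => φ (-s) π)
        (fun s => hrev f φ h s π) (-t) (-t) ⟨by linarith, le_rfl⟩
      simp only [h0, neg_zero, neg_neg, sub_self, abs_zero, zero_mul] at this
      exact sub_eq_zero.1 (abs_nonpos_iff.1 this)
  refine ⟨fun t => ⟨hfix f₁ L₁ φ₁ hL₁ hv₁ hflow₁ hinit₁ t,
    hfix f₂ L₂ φ₂ hL₂ hv₂ hflow₂ hinit₂ t⟩, fun t k hk => ?_⟩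
  have ho : (φ₁ t - φ₂ t) =o[nhds π] fun θ => (θ - π) ^ n := by
    rcases le_total 0 t with ht | ht
    · exact aux_main n f₁ f₂ π hf₁ hf₂ L₁ L₂ hL₁ hL₂ hv₂ hjets φ₁ φ₂ hflow₁ hflow₂
        hinit₁ hinit₂ t ht
    · have := aux_main n (-f₁) (-f₂) π hf₁.neg hf₂.neg L₁ L₂ hL₁.neg hL₂.neg (by simp [hv₂])
        (fun k hk => by rw [iteratedDeriv_neg, iteratedDeriv_neg, hjets k hk])
        (fun s => φ₁ (-s)) (fun s => φ₂ (-s)) (hrev f₁ φ₁ hflow₁) (hrev f₂ φ₂ hflow₂)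
        (by simpa using hinit₁) (by simpa using hinit₂) (-t) (by linarith)
      simp only [neg_neg] at this
      exact this
  have hs₁ : ContDiff ℝ (⊤ : ℕ∞) (φ₁ t) := hφ₁sm.comp (contDiff_const.prodMk contDiff_id)
  have hs₂ : ContDiff ℝ (⊤ : ℕ∞) (φ₂ t) := hφ₂sm.comp (contDiff_const.prodMk contDiff_id)
  have := aux_conv (φ₁ t - φ₂ t) (hs₁.sub hs₂) π n ho k hk
  rw [iteratedDeriv_sub (hs₁.of_le (by exact_mod_cast le_top)).contDiffAt
    (hs₂.of_le (by exact_mod_cast le_top)).contDiffAt] at this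
  exact sub_eq_zero.1 this
end

section
/- For every sequence (λ_n)_{n≥2} of real numbers there exist a smooth 2π-periodic function g : ℝ → ℝ with g(π) = 0 and g'(π) = 0, and a smooth map φ : ℝ × ℝ → ℝ with ∂_t φ(t,θ) = g(φ(t,θ)) and φ(0,θ) = θ for all t, θ, such that the time-one map satisfies φ(1,π) = π, ∂_θ φ(1,θ)|_{θ=π} = 1, and ∂_θ^n φ(1,θ)|_{θ=π} = λ_n for every n ≥ 2. -/
open scoped Real

namespace S13
section
open Set Filter Topology MeasureTheory


lemma contDiff_paramInt {P : Type} [NormedAddCommGroup P] [NormedSpace ℝ P] {n : ℕ∞}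
    (A : P → ℝ → ℝ) (hA : ContDiff ℝ n (Function.uncurry A)) :
    ContDiff ℝ n (fun p => ∫ s in (0:ℝ)..1, A p s) := by
  let χ : ContDiffBump (0:ℝ) := ⟨2, 3, by norm_num, by norm_num⟩
  have key := contDiffOn_convolution_right_with_param_comp (μ := volume) (n := n)
    (ContinuousLinearMap.mul ℝ ℝ) (s := (univ : Set P))
    (v := fun _ => (0:ℝ)) contDiffOn_const (f := (Ioc (0:ℝ) 1).indicator (fun _ => (1:ℝ)))
    (g := fun p y => χ y * A p (-y)) (k := Metric.closedBall (0:ℝ) 3) isOpen_univ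
    (isCompact_closedBall _ _) ?_ ?_ ?_
  · rw [contDiffOn_univ] at key
    convert key using 2 with p
    rw [intervalIntegral.integral_of_le (by norm_num), convolution_def,
      ← integral_indicator measurableSet_Ioc]
    congr 1
    ext s
    by_cases hs : s ∈ Ioc (0:ℝ) 1
    · have : χ (0 - s) = 1 := χ.one_of_mem_closedBall (by
        simp only [mem_Ioc] at hs
        simp only [zero_sub, Metric.mem_closedBall, dist_zero_right, norm_neg, Real.norm_eq_abs]
        rw [abs_of_pos hs.1]; show s ≤ 2; linarith)
      simp [hs]
      simp at this
      simp [this]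
    · simp [hs]
  · intro p x _ hx
    have : χ x = 0 := χ.zero_of_le_dist (by
      simp only [Metric.mem_closedBall, not_le] at hx
      exact hx.le)
    simp [this]
  · apply Integrable.locallyIntegrable
    rw [integrable_indicator_iff measurableSet_Ioc]
    simp
  · apply ContDiff.contDiffOn
    have h1 : ContDiff ℝ n (fun q : P × ℝ => χ q.2 * Function.uncurry A (q.1, -q.2)) := by
      apply ContDiff.mul
      · exact χ.contDiff.comp contDiff_snd
      · exact hA.comp (contDiff_fst.prodMk contDiff_snd.neg)
    exact h1

lemma exists_curve (g : ℝ → ℝ) (K L : NNReal) (hK : LipschitzWith K g) (hL : ∀ x, ‖g x‖ ≤ L)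
    (θ : ℝ) : ∃ γ : ℝ → ℝ, γ 0 = θ ∧ ∀ t, HasDerivAt γ (g (γ t)) t := by
  have h1 : ∀ T : ℝ, 0 < T → ∃ γ : ℝ → ℝ, γ 0 = θ ∧ ∀ t ∈ Ioo (-T) T, HasDerivAt γ (g (γ t)) t := by
    intro T hT
    have : IsPicardLindelof (fun _ => g) (tmin := -T) (tmax := T)
        ⟨0, by constructor <;> linarith⟩ θ (L * T.toNNReal) 0 L K := by
      apply IsPicardLindelof.of_time_independent
      · intro x _; exact hL x
      · exact hK.lipschitzOnWith
      · simp [hT.le]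
    obtain ⟨γ, h0, h⟩ := this.exists_eq_forall_mem_Icc_hasDerivWithinAt₀
    exact ⟨γ, h0, fun t ht => (h t (Ioo_subset_Icc_self ht)).hasDerivAt (Icc_mem_nhds ht.1 ht.2)⟩
  choose! γ h0 h using h1
  have huniq : ∀ S T : ℝ, 0 < S → S ≤ T → ∀ t ∈ Ioo (-S) S, γ S t = γ T t := by
    intro S T hS hST
    apply ODE_solution_unique_of_mem_Ioo (v := fun _ => g) (s := fun _ => univ) (K := K) (t₀ := 0)
    · intro t _; exact hK.lipschitzOnWith
    · constructor <;> linarith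
    · intro t ht; exact ⟨h S hS t ht, mem_univ _⟩
    · intro t ht; exact ⟨h T (by linarith) t ⟨by linarith [ht.1], by linarith [ht.2]⟩, mem_univ _⟩
    · rw [h0 S hS, h0 T (by linarith)]
  refine ⟨fun t => γ (|t| + 1) t, by simp [h0], fun t => ?_⟩
  have ht0 := abs_nonneg t
  have ht1 := neg_abs_le t
  have ht2 := le_abs_self t
  have : ∀ᶠ s in 𝓝 t, γ (|s| + 1) s = γ (|t| + 2) s := by
    have : ∀ᶠ s in 𝓝 t, |s| < |t| + 1 := by
      apply (continuous_abs.tendsto t).eventually_lt_const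
      linarith
    filter_upwards [this] with s hs
    have := abs_nonneg s
    have := neg_abs_le s
    have := le_abs_self s
    apply huniq _ _ (by linarith) (by linarith)
    constructor <;> linarith
  have e := this.self_of_nhds
  show HasDerivAt (fun t => γ (|t| + 1) t) (g (γ (|t| + 1) t)) t
  rw [e]
  exact (h (|t|+2) (by linarith) t ⟨by linarith, by linarith⟩).congr_of_eventuallyEq this

noncomputable def G (g : ℝ → ℝ) (x y : ℝ) : ℝ := ∫ u in (0:ℝ)..1, deriv g (x + u * (y - x))

lemma G_cont {g : ℝ → ℝ} (hg : ContDiff ℝ (⊤ : ℕ∞) g) : Continuous (Function.uncurry (G g)) := by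
  have hd : Continuous (deriv g) := hg.continuous_deriv (by simp)
  apply intervalIntegral.continuous_parametric_intervalIntegral_of_continuous'
  fun_prop

lemma G_spec {g : ℝ → ℝ} (hg : ContDiff ℝ (⊤ : ℕ∞) g) (x y : ℝ) :
    g y - g x = G g x y * (y - x) := by
  have hd : Continuous (deriv g) := hg.continuous_deriv (by simp)
  have hdiff : Differentiable ℝ g := hg.differentiable (by simp)
  have := intervalIntegral.integral_eq_sub_of_hasDerivAt (a := 0) (b := 1)
    (f := fun u => g (x + u * (y - x))) (f' := fun u => deriv g (x + u * (y - x)) * (y - x)) ?_ ?_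
  · rw [intervalIntegral.integral_mul_const] at this
    simp at this
    rw [G, this]
  · intro u _
    have h1 : HasDerivAt (fun u : ℝ => x + u * (y - x)) (y - x) u := by
      simpa using ((hasDerivAt_id u).mul_const (y - x)).const_add x
    exact (hdiff _).hasDerivAt.comp u h1
  · apply Continuous.intervalIntegrable
    fun_prop

lemma G_self (g : ℝ → ℝ) (x : ℝ) : G g x x = deriv g x := by simp [G]

lemma G_bound {g : ℝ → ℝ} {K : ℝ} (hK : ∀ x, |deriv g x| ≤ K) (x y : ℝ) : |G g x y| ≤ K := by
  have := intervalIntegral.norm_integral_le_of_norm_le_const (a := 0) (b := 1) (C := K)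
    (f := fun u => deriv g (x + u * (y - x))) (fun u _ => hK _)
  simpa [G] using this

/-- slope formula -/
lemma slope_formula {g : ℝ → ℝ} (hg : ContDiff ℝ (⊤ : ℕ∞) g) {u v : ℝ → ℝ}
    (hu : ∀ t, HasDerivAt u (g (u t)) t) (hv : ∀ t, HasDerivAt v (g (v t)) t) (t : ℝ) :
    v t - u t = (v 0 - u 0) * Real.exp (∫ s in (0:ℝ)..t, G g (u s) (v s)) := by
  have hu' : Continuous u := continuous_iff_continuousAt.2 fun t => (hu t).continuousAt
  have hv' : Continuous v := continuous_iff_continuousAt.2 fun t => (hv t).continuousAt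
  have hc : Continuous (fun s => G g (u s) (v s)) := (G_cont hg).comp (hu'.prodMk hv')
  have hI : ∀ t, HasDerivAt (fun t => ∫ s in (0:ℝ)..t, G g (u s) (v s)) (G g (u t) (v t)) t :=
    fun t => intervalIntegral.integral_hasDerivAt_right (hc.intervalIntegrable _ _)
      (hc.stronglyMeasurableAtFilter _ _) hc.continuousAt
  have hF : ∀ t, HasDerivAt (fun t => (v t - u t) * Real.exp (-∫ s in (0:ℝ)..t, G g (u s) (v s))) 0 t := by
    intro t
    have := ((hv t).sub (hu t)).mul (hI t).neg.exp
    refine this.congr_deriv ?_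
    rw [G_spec hg]
    simp only [Pi.sub_apply, Pi.neg_apply]
    ring
  have := is_const_of_deriv_eq_zero (fun t => (hF t).differentiableAt) (fun t => (hF t).deriv) t 0
  simp only [intervalIntegral.integral_same, neg_zero, Real.exp_zero, mul_one] at this
  rw [← this, mul_assoc, ← Real.exp_add]
  simp

lemma exists_flow {g : ℝ → ℝ} (hg : ContDiff ℝ (⊤ : ℕ∞) g) (K L : ℝ)
    (hK : ∀ x, |deriv g x| ≤ K) (hL : ∀ x, |g x| ≤ L) :
    ∃ φ : ℝ → ℝ → ℝ, ContDiff ℝ (⊤ : ℕ∞) (Function.uncurry φ) ∧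
      (∀ t θ : ℝ, HasDerivAt (fun s => φ s θ) (g (φ t θ)) t) ∧ (∀ θ : ℝ, φ 0 θ = θ) := by
  have hK0 : 0 ≤ K := (abs_nonneg _).trans (hK 0)
  have hL0 : 0 ≤ L := (abs_nonneg _).trans (hL 0)
  have hd : Continuous (deriv g) := hg.continuous_deriv (by simp)
  have hdiff : Differentiable ℝ g := hg.differentiable (by simp)
  have hlip : LipschitzWith ⟨K, hK0⟩ g := lipschitzWith_of_nnnorm_deriv_le hdiff (fun x => hK x)
  choose ψ h0 h using exists_curve g ⟨K, hK0⟩ ⟨L, hL0⟩ hlip hL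
  have hψt : ∀ θ, Continuous (ψ θ) :=
    fun θ => continuous_iff_continuousAt.2 fun t => (h θ t).continuousAt
  have hslope : ∀ t θ θ', ψ θ' t - ψ θ t =
      (θ' - θ) * Real.exp (∫ s in (0:ℝ)..t, G g (ψ θ s) (ψ θ' s)) := by
    intro t θ θ'
    have := slope_formula hg (h θ) (h θ') t
    rwa [h0, h0] at this
  have hcont : Continuous (fun p : ℝ × ℝ => ψ p.2 p.1) := by
    rw [continuous_iff_continuousAt]
    rintro ⟨t, θ⟩
    have h1 : Tendsto (fun p : ℝ × ℝ => |p.2 - θ| * Real.exp (K * |p.1|)) (𝓝 (t, θ)) (𝓝 0) := by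
      have : Continuous (fun p : ℝ × ℝ => |p.2 - θ| * Real.exp (K * |p.1|)) := by fun_prop
      simpa using this.tendsto (t, θ)
    have h2 : Tendsto (fun p : ℝ × ℝ => ψ p.2 p.1 - ψ θ p.1) (𝓝 (t, θ)) (𝓝 0) := by
      apply squeeze_zero_norm _ h1
      rintro ⟨t', θ'⟩
      simp only
      rw [hslope, norm_mul, Real.norm_eq_abs, Real.norm_eq_abs, Real.abs_exp]
      gcongr
      have := intervalIntegral.norm_integral_le_of_norm_le_const (a := 0) (b := t') (C := K)
        (f := fun s => G g (ψ θ s) (ψ θ' s)) (fun u _ => G_bound hK _ _)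
      simp only [sub_zero, Real.norm_eq_abs] at this
      exact (le_abs_self _).trans this
    have h3 : Tendsto (fun p : ℝ × ℝ => ψ θ p.1) (𝓝 (t, θ)) (𝓝 (ψ θ t)) :=
      ((hψt θ).comp continuous_fst).tendsto (t, θ)
    have := h2.add h3
    simpa [ContinuousAt] using this
  let φ : ℝ × ℝ → ℝ := fun p => ψ p.2 p.1
  let E : ℝ × ℝ → ℝ := fun p => Real.exp (p.1 * ∫ s in (0:ℝ)..1, deriv g (φ (p.1 * s, p.2)))
  have hG := G_cont hg
  have hder : ∀ p, HasFDerivAt φ ((g (φ p)) • ContinuousLinearMap.fst ℝ ℝ ℝ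
      + (E p) • ContinuousLinearMap.snd ℝ ℝ ℝ) p := by
    rintro ⟨t, θ⟩
    let E2 : ℝ × ℝ → ℝ := fun p => Real.exp (∫ s in (0:ℝ)..p.1, G g (ψ θ s) (ψ p.2 s))
    have hE2 : Continuous E2 := by
      apply Real.continuous_exp.comp
      apply intervalIntegral.continuous_parametric_intervalIntegral_of_continuous _ continuous_fst
      have c1 : Continuous (fun q : (ℝ × ℝ) × ℝ => ψ θ q.2) := (hψt θ).comp continuous_snd
      have c2 : Continuous (fun q : (ℝ × ℝ) × ℝ => ψ q.1.2 q.2) :=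
        hcont.comp (continuous_snd.prodMk (continuous_snd.comp continuous_fst))
      exact hG.comp (c1.prodMk c2)
    have hEE : E2 (t, θ) = E (t, θ) := by
      simp only [E2, E, φ, G_self]
      congr 1
      have := intervalIntegral.mul_integral_comp_mul_left (a := 0) (b := 1)
        (f := fun s => deriv g (ψ θ s)) t
      simp only [mul_zero, mul_one] at this
      exact this.symm
    have e : φ = fun p => (p.2 - θ) * E2 p + ψ θ p.1 := by
      ext ⟨t', θ'⟩
      have := hslope t' θ θ'
      simp only [φ, E2]
      linarith
    have d1 : HasFDerivAt (fun p : ℝ × ℝ => ψ θ p.1) (g (ψ θ t) • ContinuousLinearMap.fst ℝ ℝ ℝ) (t, θ) := by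
      have := (h θ t).comp_hasFDerivAt (t, θ) (hasFDerivAt_fst (𝕜 := ℝ) (p := (t, θ)))
      exact this
    have d2 : HasFDerivAt (fun p : ℝ × ℝ => (p.2 - θ) * E2 p) (E (t, θ) • ContinuousLinearMap.snd ℝ ℝ ℝ) (t, θ) := by
      rw [hasFDerivAt_iff_isLittleO]
      have h1 : (fun p : ℝ × ℝ => E2 p - E (t, θ)) =o[𝓝 (t, θ)] (fun _ => (1:ℝ)) := by
        rw [Asymptotics.isLittleO_one_iff, ← hEE]
        simpa using (hE2.tendsto (t, θ)).sub_const (E2 (t, θ))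
      have h2 : (fun p : ℝ × ℝ => p.2 - θ) =O[𝓝 (t, θ)] (fun p => p - (t, θ)) := by
        apply Asymptotics.isBigO_of_le
        intro p
        exact norm_snd_le (p - (t, θ))
      have h4 := h2.norm_right.mul_isLittleO h1
      refine (h4.congr ?_ ?_).of_norm_right
      · intro p; simp; ring
      · intro p; simp
    rw [e]
    refine (d2.add d1).congr_fderiv ?_
    rw [add_comm, ← e]
  have hsm : ∀ n : ℕ, ContDiff ℝ n φ := by
    intro n
    induction n with
    | zero => exact contDiff_zero.2 hcont
    | succ n ih =>
      push_cast
      rw [contDiff_succ_iff_hasFDerivAt]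
      refine ⟨_, ?_, hder⟩
      have hgn : ContDiff ℝ n g := hg.of_le (by exact_mod_cast le_top)
      have hdn : ContDiff ℝ n (deriv g) := by
        have : ContDiff ℝ (n + 1 : ℕ) g := hg.of_le (by exact_mod_cast le_top)
        push_cast at this
        exact (contDiff_succ_iff_deriv.1 this).2.2
      apply ContDiff.add
      · exact (hgn.comp ih).smul contDiff_const
      · have hE : ContDiff ℝ n E := ?_
        · exact hE.smul contDiff_const
        apply Real.contDiff_exp.comp
        apply contDiff_fst.mul
        apply contDiff_paramInt (n := n) (fun (p : ℝ × ℝ) s => deriv g (φ (p.1 * s, p.2)))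
        apply hdn.comp
        apply ih.comp
        apply ContDiff.prodMk
        · exact (contDiff_fst.comp contDiff_fst).mul contDiff_snd
        · exact contDiff_snd.comp contDiff_fst
  exact ⟨fun t θ => ψ θ t, contDiff_infty.2 hsm, fun t θ => h θ t, h0⟩



lemma traj_bound {g : ℝ → ℝ} {a K : ℝ} (hK0 : 0 ≤ K) (hK : ∀ x, |g x| ≤ K * |x - a|)
    {u : ℝ → ℝ} (hu : ∀ t, HasDerivAt u (g (u t)) t) :
    ∀ t ∈ Icc (0:ℝ) 1, |u t - a| ≤ Real.exp K * |u 0 - a| := by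
  intro t ht
  have hu' : Continuous u := continuous_iff_continuousAt.2 fun t => (hu t).continuousAt
  have := norm_le_gronwallBound_of_norm_deriv_right_le (f := fun t => u t - a)
    (f' := fun t => g (u t)) (δ := |u 0 - a|) (K := K) (ε := 0) (a := 0) (b := 1)
    (by fun_prop) (fun x _ => ((hu x).sub_const a).hasDerivWithinAt) (by simp)
    (fun x _ => by simpa using hK (u x)) t ht
  rw [gronwallBound_ε0, Real.norm_eq_abs] at this
  refine this.trans ?_
  rw [mul_comm]
  gcongr
  simp only [sub_zero]
  nlinarith [ht.2]

lemma drift_bound {g : ℝ → ℝ} {C : ℝ} {u : ℝ → ℝ} (hu : ∀ t, HasDerivAt u (g (u t)) t)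
    (hC : ∀ t ∈ Icc (0:ℝ) 1, |g (u t)| ≤ C) :
    ∀ t ∈ Icc (0:ℝ) 1, |u t - u 0| ≤ C := by
  intro t ht
  have hu' : Continuous u := continuous_iff_continuousAt.2 fun t => (hu t).continuousAt
  have hC0 : 0 ≤ C := (abs_nonneg _).trans (hC t ht)
  have := norm_le_gronwallBound_of_norm_deriv_right_le (f := fun t => u t - u 0)
    (f' := fun t => g (u t)) (δ := 0) (K := 0) (ε := C) (a := 0) (b := 1)
    (by fun_prop) (fun x _ => ((hu x).sub_const (u 0)).hasDerivWithinAt) (by simp)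
    (fun x hx => by simpa using hC x ⟨hx.1, hx.2.le⟩) t ht
  rw [gronwallBound_K0, Real.norm_eq_abs] at this
  refine this.trans ?_
  simp only [sub_zero, zero_add]
  nlinarith [ht.2]

lemma compare {g h : ℝ → ℝ} {a K c : ℝ} {n : ℕ} (hn : 1 ≤ n) (hK0 : 0 ≤ K)
    (hgK : ∀ x, |g x| ≤ K * |x - a|) (hhK : ∀ x, |h x| ≤ K * |x - a|)
    (hg : HasStrictDerivAt g 0 a) (hh : HasDerivAt h 0 a)
    (hk : (fun x => g x - h x - c * (x - a) ^ n) =o[𝓝 a] (fun x => (x - a) ^ n))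
    {U V : ℝ → ℝ → ℝ} (hU : ∀ t θ, HasDerivAt (fun s => U s θ) (g (U t θ)) t)
    (hV : ∀ t θ, HasDerivAt (fun s => V s θ) (h (V t θ)) t)
    (hU0 : ∀ θ, U 0 θ = θ) (hV0 : ∀ θ, V 0 θ = θ) :
    (fun θ => U 1 θ - V 1 θ - c * (θ - a) ^ n) =o[𝓝 a] (fun x => (x - a) ^ n) := by
  set M := Real.exp K with hM
  have hM0 : 0 < M := Real.exp_pos K
  set C := |c| + M ^ n + |c| * (M * n * M ^ (n - 1)) with hC
  have hC0 : 0 ≤ C := by positivity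
  have he : (0:ℝ) < Real.exp 1 := Real.exp_pos 1
  rw [Asymptotics.isLittleO_iff]
  intro η hη
  set ε := min 1 (η / (C * Real.exp 1 + 1)) with hε
  have hε0 : 0 < ε := by positivity
  have hε1 : ε ≤ 1 := min_le_left _ _
  have hε2 : ε * C * Real.exp 1 ≤ η := by
    have h1 : ε ≤ η / (C * Real.exp 1 + 1) := min_le_right _ _
    rw [le_div_iff₀ (by positivity)] at h1
    nlinarith
  have hha : h a = 0 := by simpa using hhK a
  -- local estimates
  have e1 : ∀ᶠ p : ℝ × ℝ in 𝓝 (a, a), |g p.1 - g p.2| ≤ ε * |p.1 - p.2| := by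
    have := hg.isLittleO.def hε0
    simpa using this
  have e2 : ∀ᶠ x in 𝓝 a, |h x| ≤ ε * |x - a| := by
    have := (hasDerivAt_iff_isLittleO.1 hh).def hε0
    simpa [hha] using this
  have e3 := hk.def hε0
  rw [nhds_prod_eq] at e1
  obtain ⟨s1, hs1, s2, hs2, hs12⟩ := Filter.eventually_prod_iff.1 e1
  have e4 := (hs1.and hs2).and (e2.and e3)
  obtain ⟨δ, hδ, hball⟩ := Metric.eventually_nhds_iff.1 e4
  have : ∀ᶠ θ in 𝓝 a, M * |θ - a| < δ := by
    have : Continuous (fun θ => M * |θ - a|) := by fun_prop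
    apply (this.tendsto a).eventually_lt_const
    simpa using hδ
  filter_upwards [this] with θ hθ
  set x := θ - a with hx
  have bU : ∀ t ∈ Icc (0:ℝ) 1, |U t θ - a| ≤ M * |x| := by
    have := traj_bound hK0 hgK (fun t => hU t θ)
    simpa [hU0] using this
  have bV : ∀ t ∈ Icc (0:ℝ) 1, |V t θ - a| ≤ M * |x| := by
    have := traj_bound hK0 hhK (fun t => hV t θ)
    simpa [hV0] using this
  have nU : ∀ t ∈ Icc (0:ℝ) 1, dist (U t θ) a < δ := fun t ht => (bU t ht).trans_lt hθ
  have nV : ∀ t ∈ Icc (0:ℝ) 1, dist (V t θ) a < δ := fun t ht => (bV t ht).trans_lt hθ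
  have dV : ∀ t ∈ Icc (0:ℝ) 1, |V t θ - θ| ≤ ε * (M * |x|) := by
    have := drift_bound (fun t => hV t θ) (C := ε * (M * |x|)) (fun t ht => by
      refine (hball (nV t ht)).2.1.trans ?_
      gcongr
      exact bV t ht)
    simpa [hV0] using this
  have hxn : |x| * |x| ^ (n - 1) = |x| ^ n := by
    rw [← pow_succ']; congr 1; omega
  have dP : ∀ t ∈ Icc (0:ℝ) 1, |(V t θ - a) ^ n - x ^ n| ≤ ε * (M * n * M ^ (n - 1)) * |x| ^ n := by
    intro t ht
    have h1M : 1 ≤ M := Real.one_le_exp hK0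
    calc |(V t θ - a) ^ n - x ^ n| ≤ |(V t θ - a) - x| * n * max |V t θ - a| |x| ^ (n - 1) :=
          abs_pow_sub_pow_le _ _ _
      _ ≤ (ε * (M * |x|)) * n * (M * |x|) ^ (n - 1) := by
          gcongr
          · have := dV t ht
            rwa [hx, sub_sub_sub_cancel_right]
          · apply max_le (bV t ht)
            nlinarith [abs_nonneg x]
      _ = ε * (M * n * M ^ (n - 1)) * (|x| * |x| ^ (n - 1)) := by rw [mul_pow]; ring
      _ = _ := by rw [hxn]
  have hz : ∀ t, HasDerivAt (fun t => U t θ - V t θ - t * (c * x ^ n))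
      (g (U t θ) - h (V t θ) - c * x ^ n) t := by
    intro t
    have := ((hU t θ).sub (hV t θ)).sub ((hasDerivAt_id t).mul_const (c * x ^ n))
    rw [one_mul] at this
    exact this
  have hz' : Continuous (fun t => U t θ - V t θ - t * (c * x ^ n)) :=
    continuous_iff_continuousAt.2 fun t => (hz t).continuousAt
  have hbound : ∀ t ∈ Ico (0:ℝ) 1, ‖g (U t θ) - h (V t θ) - c * x ^ n‖ ≤
      1 * ‖U t θ - V t θ - t * (c * x ^ n)‖ + ε * C * |x| ^ n := by
    intro t ht'
    have ht : t ∈ Icc (0:ℝ) 1 := ⟨ht'.1, ht'.2.le⟩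
    simp only [Real.norm_eq_abs]
    have q1 : |g (U t θ) - g (V t θ)| ≤ ε * |U t θ - V t θ| :=
      hs12 (hball (nU t ht)).1.1 (hball (nV t ht)).1.2
    have q2 : |g (V t θ) - h (V t θ) - c * (V t θ - a) ^ n| ≤ ε * (M ^ n * |x| ^ n) := by
      have := (hball (nV t ht)).2.2
      simp only [Real.norm_eq_abs, abs_pow] at this
      refine this.trans ?_
      rw [← mul_pow]
      gcongr
      exact bV t ht
    have q3 : |c * ((V t θ - a) ^ n - x ^ n)| ≤ |c| * (ε * (M * n * M ^ (n - 1)) * |x| ^ n) := by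
      rw [abs_mul]
      gcongr
      exact dP t ht
    have q4 : |U t θ - V t θ| ≤ |U t θ - V t θ - t * (c * x ^ n)| + |c| * |x| ^ n := by
      have h1 : U t θ - V t θ = (U t θ - V t θ - t * (c * x ^ n)) + t * (c * x ^ n) := by ring
      have h2 : |t * (c * x ^ n)| ≤ |c| * |x| ^ n := by
        rw [abs_mul, abs_mul, abs_pow, abs_of_nonneg ht.1]
        have : 0 ≤ |c| * |x| ^ n := by positivity
        nlinarith [ht.2]
      calc |U t θ - V t θ| = |(U t θ - V t θ - t * (c * x ^ n)) + t * (c * x ^ n)| := by rw [← h1]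
        _ ≤ _ := (abs_add_le _ _).trans (by gcongr)
    have q5 : g (U t θ) - h (V t θ) - c * x ^ n = (g (U t θ) - g (V t θ)) +
      (g (V t θ) - h (V t θ) - c * (V t θ - a) ^ n) + c * ((V t θ - a) ^ n - x ^ n) := by ring
    rw [q5]
    refine (abs_add_three _ _ _).trans ?_
    have q6 : ε * |U t θ - V t θ| ≤ 1 * |U t θ - V t θ - t * (c * x ^ n)| + ε * (|c| * |x| ^ n) := by
      calc ε * |U t θ - V t θ| ≤ ε * (|U t θ - V t θ - t * (c * x ^ n)| + |c| * |x| ^ n) := by gcongr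
        _ = ε * |U t θ - V t θ - t * (c * x ^ n)| + ε * (|c| * |x| ^ n) := by ring
        _ ≤ _ := by gcongr
    have q7 : ε * C * |x| ^ n = ε * (|c| * |x| ^ n) + ε * (M ^ n * |x| ^ n) +
      |c| * (ε * (M * n * M ^ (n - 1)) * |x| ^ n) := by rw [hC]; ring
    linarith
  have := norm_le_gronwallBound_of_norm_deriv_right_le (δ := 0) (a := 0) (b := 1) hz'.continuousOn
    (fun t _ => (hz t).hasDerivWithinAt) (by simp [hU0, hV0]) hbound 1 (by simp)
  rw [gronwallBound_of_K_ne_0 (by norm_num)] at this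
  simp only [one_mul] at this
  rw [norm_pow, Real.norm_eq_abs x]
  refine this.trans ?_
  have hp : 0 ≤ |x| ^ n := by positivity
  simp only [sub_zero, zero_mul, div_one, zero_add]
  have : ε * C * |x| ^ n * (Real.exp 1 - 1) ≤ ε * C * |x| ^ n * Real.exp 1 := by
    gcongr; linarith
  refine this.trans ?_
  nlinarith

lemma jet_zero {F : ℝ → ℝ} {a : ℝ} {n : ℕ} (hF : ContDiff ℝ (⊤ : ℕ∞) F)
    (ho : F =o[𝓝 a] (fun x => (x - a) ^ n)) : ∀ j ≤ n, iteratedDeriv j F a = 0 := by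
  intro j
  induction j using Nat.strong_induction_on with
  | _ j ih =>
    intro hj
    have h1 := taylor_isLittleO_univ (x₀ := a) (n := j) (f := F) (hF.of_le (by exact_mod_cast le_top))
    have h2 : ∀ x, taylorWithinEval F j univ a x = (iteratedDeriv j F a / j.factorial) * (x - a) ^ j := by
      intro x
      rw [taylor_within_apply, Finset.sum_range_succ, Finset.sum_eq_zero]
      · simp [iteratedDerivWithin_univ]; ring
      · intro i hi
        rw [iteratedDerivWithin_univ, ih i (by simpa using hi) (by
          have := Finset.mem_range.1 hi; omega)]
        simp
    simp only [h2] at h1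
    have h3 : (fun x => (x - a) ^ n) =O[𝓝 a] (fun x => (x - a) ^ j) := by
      have : (fun x => (x - a) ^ (n - j)) =O[𝓝 a] (fun _ => (1:ℝ)) := by
        have hc : Continuous (fun x : ℝ => (x - a) ^ (n - j)) := by fun_prop
        exact (hc.tendsto a).isBigO_one ℝ
      have := this.mul (Asymptotics.isBigO_refl (fun x => (x - a) ^ j) (𝓝 a))
      refine this.congr ?_ ?_
      · intro x; rw [← pow_add]; congr 1; omega
      · intro x; simp
    have h4 := (ho.trans_isBigO h3).sub h1
    simp only [sub_sub_cancel] at h4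
    have h5 : (fun _ : ℝ => iteratedDeriv j F a / j.factorial) =o[𝓝[≠] a] (fun _ => (1:ℝ)) := by
      rw [Asymptotics.isLittleO_iff] at h4 ⊢
      intro c hc
      filter_upwards [(h4 hc).filter_mono nhdsWithin_le_nhds, self_mem_nhdsWithin] with x hx hxa
      rw [norm_mul, mul_le_mul_iff_left₀] at hx
      · simpa using hx
      · rw [norm_pos_iff]; exact pow_ne_zero _ (sub_ne_zero.2 hxa)
    rw [Asymptotics.isLittleO_const_const_iff] at h5
    have h6 : iteratedDeriv j F a / j.factorial = 0 := by simpa using h5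
    have : (j.factorial : ℝ) ≠ 0 := by positivity
    exact (div_eq_zero_iff.1 h6).resolve_right this

lemma jet_eq {F : ℝ → ℝ} {a c : ℝ} {n : ℕ} (hF : ContDiff ℝ (⊤ : ℕ∞) F)
    (ho : (fun x => F x - c * (x - a) ^ n) =o[𝓝 a] (fun x => (x - a) ^ n)) :
    iteratedDeriv n F a = c * n.factorial := by
  have hp : ContDiff ℝ (⊤ : ℕ∞) (fun x : ℝ => c * (x - a) ^ n) := by fun_prop
  have h1 := jet_zero (hF.sub hp) ho n le_rfl
  have h2 : iteratedDeriv n (fun x : ℝ => c * (x - a) ^ n) a = c * n.factorial := by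
    rw [iteratedDeriv_const_mul_field]
    congr 1
    have := congrFun (iteratedDeriv_comp_sub_const n (fun x : ℝ => x ^ n) a) a
    rw [this]
    simp [Nat.descFactorial_self]
  have h3 : iteratedDeriv n (fun x => F x - c * (x - a) ^ n) a =
      iteratedDeriv n F a - iteratedDeriv n (fun x : ℝ => c * (x - a) ^ n) a :=
    iteratedDeriv_fun_sub (hF.contDiffAt.of_le (by exact_mod_cast le_top)) (hp.contDiffAt.of_le (by exact_mod_cast le_top))
  rw [h3, h2] at h1
  linarith



lemma borel (b : ℕ → ℝ) : ∃ B : ℝ → ℝ, ContDiff ℝ (⊤ : ℕ∞) B ∧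
    ∀ n : ℕ, (fun x => B x - ∑ j ∈ Finset.range (n + 1), b j * x ^ j) =o[𝓝 0] (fun x => x ^ n) := by
  let χ : ContDiffBump (0:ℝ) := ⟨1, 2, by norm_num, by norm_num⟩
  have hψ : ∀ j : ℕ, ContDiff ℝ (⊤ : ℕ∞) (fun y => y ^ j * χ y) := fun j =>
    (contDiff_id.pow j).mul χ.contDiff
  have hsupp : ∀ j : ℕ, HasCompactSupport (fun y => y ^ j * χ y) := fun j =>
    χ.hasCompactSupport.mul_left
  have hC1 : ∀ j k : ℕ, ∃ C : ℝ, ∀ y, |iteratedDeriv k (fun y => y ^ j * χ y) y| ≤ C := by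
    intro j k
    obtain ⟨C, hC⟩ := ((hsupp j).iteratedFDeriv (𝕜 := ℝ) k).exists_bound_of_continuous
      ((hψ j).continuous_iteratedFDeriv (by exact_mod_cast le_top))
    refine ⟨C, fun y => ?_⟩
    have := hC y
    rwa [norm_iteratedFDeriv_eq_norm_iteratedDeriv] at this
  choose C hC using hC1
  let D : ℕ → ℝ := fun j => ∑ k ∈ Finset.range j, |C j k|
  have hD0 : ∀ j, 0 ≤ D j := fun j => Finset.sum_nonneg fun _ _ => abs_nonneg _
  have hD : ∀ j k, k < j → ∀ y, |iteratedDeriv k (fun y => y ^ j * χ y) y| ≤ D j := by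
    intro j k hk y
    refine (hC j k y).trans ((le_abs_self _).trans ?_)
    exact Finset.single_le_sum (f := fun k => |C j k|) (fun _ _ => abs_nonneg _) (Finset.mem_range.2 hk)
  have hε : ∀ j, ∃ ε : ℝ, 0 < ε ∧ ε ≤ 1 ∧ |b j| * ε * (D j + 2) ≤ (1/2) ^ j := by
    intro j
    have hpos : 0 < |b j| * (D j + 2) + 1 := by have := hD0 j; positivity
    refine ⟨min 1 ((1/2) ^ j / (|b j| * (D j + 2) + 1)), by positivity, min_le_left _ _, ?_⟩
    have h1 := min_le_right (1:ℝ) ((1/2) ^ j / (|b j| * (D j + 2) + 1))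
    have h0 : 0 < min (1:ℝ) ((1/2) ^ j / (|b j| * (D j + 2) + 1)) := by positivity
    rw [le_div_iff₀ hpos] at h1
    nlinarith
  choose ε hε0 hε1 hε2 using hε
  let f : ℕ → ℝ → ℝ := fun j x => b j * x ^ j * χ ((ε j)⁻¹ * x)
  have hf : ∀ j, f j = fun x => (b j * ε j ^ j) * ((fun y => y ^ j * χ y) ((ε j)⁻¹ * x)) := by
    intro j
    ext x
    have : ε j ^ j ≠ 0 := pow_ne_zero _ (hε0 j).ne'
    simp only [f, mul_pow, inv_pow]
    field_simp
  have hfs : ∀ j, ContDiff ℝ (⊤ : ℕ∞) (f j) := by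
    intro j
    rw [hf]
    exact contDiff_const.mul ((hψ j).comp (contDiff_const.mul contDiff_id))
  have hfb : ∀ j k, k < j → ∀ x, ‖iteratedFDeriv ℝ k (f j) x‖ ≤ (1/2) ^ j := by
    intro j k hk x
    rw [norm_iteratedFDeriv_eq_norm_iteratedDeriv, hf, iteratedDeriv_const_mul_field,
      iteratedDeriv_comp_const_mul ((hψ j).of_le (by exact_mod_cast le_top))]
    have he := hε0 j
    have h1 : ‖b j * ε j ^ j * ((ε j)⁻¹ ^ k * iteratedDeriv k (fun y => y ^ j * χ y) ((ε j)⁻¹ * x))‖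
        = |b j| * ε j ^ (j - k) * |iteratedDeriv k (fun y => y ^ j * χ y) ((ε j)⁻¹ * x)| := by
      simp only [norm_mul, norm_pow, norm_inv, Real.norm_eq_abs, abs_of_pos he]
      rw [pow_sub₀ _ he.ne' hk.le, inv_pow]
      ring
    rw [h1]
    refine le_trans ?_ (hε2 j)
    gcongr
    · exact pow_le_of_le_one he.le (hε1 j) (by omega)
    · exact (hD j k hk _).trans (by linarith)
  have hsum2 : Summable (fun j : ℕ => (1/2 : ℝ) ^ j) := summable_geometric_two
  refine ⟨fun x => ∑' j, f j x, ?_, ?_⟩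
  · apply contDiff_tsum_of_eventually (v := fun _ j => (1/2 : ℝ) ^ j) hfs (fun _ _ => hsum2)
    intro k _
    rw [Nat.cofinite_eq_atTop]
    filter_upwards [eventually_gt_atTop k] with j hj x
    exact hfb j k hj x
  · intro n
    have hsum : ∀ x, Summable (fun j => f j x) := by
      intro x
      apply Summable.of_norm_bounded_eventually_nat hsum2
      filter_upwards [eventually_gt_atTop 0] with j hj
      have := hfb j 0 hj x
      rwa [norm_iteratedFDeriv_zero] at this
    have htail : ∀ x : ℝ, |x| ≤ 1 → ∀ j, n + 2 ≤ j → ‖f j x‖ ≤ (1/2) ^ j * |x| ^ (n + 1) := by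
      intro x hx j hj
      have he := hε0 j
      by_cases hxe : 2 * ε j ≤ |x|
      · have : χ ((ε j)⁻¹ * x) = 0 := χ.zero_of_le_dist (by
          show 2 ≤ dist _ _
          rw [dist_zero_right, norm_mul, norm_inv, Real.norm_eq_abs, Real.norm_eq_abs, abs_of_pos he,
            inv_mul_eq_div, le_div_iff₀ he]
          exact hxe)
        simp only [f, this, mul_zero, norm_zero]
        positivity
      · push Not at hxe
        simp only [f, norm_mul, norm_pow, Real.norm_eq_abs]
        have hχ : |χ ((ε j)⁻¹ * x)| ≤ 1 := by
          rw [abs_of_nonneg χ.nonneg]; exact χ.le_one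
        have e1 : |x| ^ j = |x| * |x| ^ (j - 1) := by rw [← pow_succ']; congr 1; omega
        have e2 : |x| ^ (j - 1) ≤ |x| ^ (n + 1) :=
          pow_le_pow_of_le_one (abs_nonneg x) hx (by omega)
        calc |b j| * |x| ^ j * |χ ((ε j)⁻¹ * x)| ≤ |b j| * |x| ^ j * 1 := by gcongr
          _ = |b j| * |x| * |x| ^ (j - 1) := by rw [e1]; ring
          _ ≤ |b j| * (2 * ε j) * |x| ^ (n + 1) := by gcongr
          _ ≤ (1/2) ^ j * |x| ^ (n + 1) := by
            gcongr
            refine le_trans ?_ (hε2 j)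
            have := mul_nonneg (mul_nonneg (abs_nonneg (b j)) he.le) (hD0 j)
            nlinarith
    have hx1 : ∀ᶠ x : ℝ in 𝓝 0, |x| ≤ 1 := by
      filter_upwards [Metric.closedBall_mem_nhds (0:ℝ) one_pos] with x hx
      simpa using hx
    have hχ1 : ∀ᶠ x : ℝ in 𝓝 0, ∀ j ∈ Finset.range (n + 2), f j x = b j * x ^ j := by
      rw [Filter.eventually_all_finset]
      intro j _
      have he := hε0 j
      filter_upwards [Metric.closedBall_mem_nhds (0:ℝ) he] with x hx
      have : χ ((ε j)⁻¹ * x) = 1 := χ.one_of_mem_closedBall (by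
        rw [Metric.mem_closedBall, dist_zero_right] at hx ⊢
        show _ ≤ (1:ℝ)
        rw [norm_mul, norm_inv, Real.norm_eq_abs (ε j), abs_of_pos he, inv_mul_eq_div,
          div_le_one he]
        exact hx)
      simp [f, this]
    have hO : (fun x => (∑' j, f j x) - ∑ j ∈ Finset.range (n + 2), b j * x ^ j)
        =O[𝓝 0] (fun x => x ^ (n + 1)) := by
      apply Asymptotics.IsBigO.of_bound 2
      filter_upwards [hx1, hχ1] with x hx hχx
      rw [← Finset.sum_congr rfl hχx, ← (hsum x).sum_add_tsum_nat_add (n + 2), add_sub_cancel_left,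
        norm_pow, Real.norm_eq_abs x]
      have hs : HasSum (fun j : ℕ => (1/2 : ℝ) ^ j * |x| ^ (n + 1)) (2 * |x| ^ (n + 1)) :=
        hasSum_geometric_two.mul_right _
      apply tsum_of_norm_bounded hs
      intro j
      refine (htail x hx (j + (n + 2)) (by omega)).trans ?_
      gcongr ?_ * _
      exact pow_le_pow_of_le_one (by norm_num) (by norm_num) (by omega)
    have hO2 : (fun x : ℝ => b (n + 1) * x ^ (n + 1)) =O[𝓝 0] (fun x => x ^ (n + 1)) :=
      Asymptotics.isBigO_const_mul_self _ _ _
    have hO3 := hO.add hO2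
    refine (hO3.congr_left ?_).trans_isLittleO ?_
    · intro x
      rw [Finset.sum_range_succ _ (n + 1)]
      ring
    · exact Asymptotics.isLittleO_pow_pow (by omega)

noncomputable def vf (B : ℝ → ℝ) (θ : ℝ) : ℝ := B (Real.sin (θ - π))

lemma vf_smooth {B : ℝ → ℝ} (hB : ContDiff ℝ (⊤ : ℕ∞) B) : ContDiff ℝ (⊤ : ℕ∞) (vf B) :=
  hB.comp (Real.contDiff_sin.comp (contDiff_id.sub contDiff_const))

lemma vf_hasDerivAt {B : ℝ → ℝ} (hB : ContDiff ℝ (⊤ : ℕ∞) B) (θ : ℝ) :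
    HasDerivAt (vf B) (deriv B (Real.sin (θ - π)) * Real.cos (θ - π)) θ := by
  have h1 : HasDerivAt (fun θ : ℝ => Real.sin (θ - π)) (Real.cos (θ - π)) θ := by
    simpa using ((hasDerivAt_id θ).sub_const π).sin
  exact ((hB.differentiable (by simp)) _).hasDerivAt.comp θ h1

lemma bdd_sin {f : ℝ → ℝ} (hf : Continuous f) : ∃ C : ℝ, ∀ x, |f (Real.sin x)| ≤ C := by
  obtain ⟨C, hC⟩ := (isCompact_Icc (a := (-1:ℝ)) (b := 1)).exists_bound_of_continuousOn hf.continuousOn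
  exact ⟨C, fun x => hC _ ⟨Real.neg_one_le_sin x, Real.sin_le_one x⟩⟩

lemma vf_deriv_bdd {B : ℝ → ℝ} (hB : ContDiff ℝ (⊤ : ℕ∞) B) :
    ∃ K : ℝ, ∀ x, |deriv (vf B) x| ≤ K := by
  obtain ⟨C, hC⟩ := bdd_sin (hB.continuous_deriv (by simp))
  refine ⟨C, fun x => ?_⟩
  rw [(vf_hasDerivAt hB x).deriv, abs_mul]
  calc _ ≤ |deriv B (Real.sin (x - π))| * 1 := by
        gcongr; exact Real.abs_cos_le_one _
    _ ≤ C := by rw [mul_one]; exact hC _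

lemma vf_flow (B : ℝ → ℝ) (hB : ContDiff ℝ (⊤ : ℕ∞) B) :
    ∃ φ : ℝ → ℝ → ℝ, ContDiff ℝ (⊤ : ℕ∞) (Function.uncurry φ) ∧
      (∀ t θ : ℝ, HasDerivAt (fun s => φ s θ) (vf B (φ t θ)) t) ∧ (∀ θ : ℝ, φ 0 θ = θ) := by
  obtain ⟨K, hK⟩ := vf_deriv_bdd hB
  obtain ⟨L, hL⟩ := bdd_sin hB.continuous
  exact exists_flow (vf_smooth hB) K L hK (fun x => hL _)

lemma vf_lin {B : ℝ → ℝ} (hB : ContDiff ℝ (⊤ : ℕ∞) B) (h0 : B 0 = 0) :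
    ∃ K : ℝ, 0 ≤ K ∧ ∀ x, |vf B x| ≤ K * |x - π| := by
  obtain ⟨K, hK⟩ := vf_deriv_bdd hB
  have hK0 : 0 ≤ K := (abs_nonneg _).trans (hK 0)
  have hlip : LipschitzWith ⟨K, hK0⟩ (vf B) :=
    lipschitzWith_of_nnnorm_deriv_le ((vf_smooth hB).differentiable (by simp)) (fun x => hK x)
  refine ⟨K, hK0, fun x => ?_⟩
  have h1 := hlip.dist_le_mul x π
  have h2 : vf B π = 0 := by simp [vf, h0]
  rw [h2, dist_zero_right] at h1
  exact h1

lemma vf_compare {B P : ℝ → ℝ} {c : ℝ} {n : ℕ} (hn : 1 ≤ n) (hB : ContDiff ℝ (⊤ : ℕ∞) B)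
    (hP : ContDiff ℝ (⊤ : ℕ∞) P) (hB0 : B 0 = 0) (hP0 : P 0 = 0) (hB1 : deriv B 0 = 0)
    (hP1 : deriv P 0 = 0) (hk : (fun x => B x - P x - c * x ^ n) =o[𝓝 0] (fun x => x ^ n))
    {U V : ℝ → ℝ → ℝ} (hU : ∀ t θ, HasDerivAt (fun s => U s θ) (vf B (U t θ)) t)
    (hV : ∀ t θ, HasDerivAt (fun s => V s θ) (vf P (V t θ)) t)
    (hU0 : ∀ θ, U 0 θ = θ) (hV0 : ∀ θ, V 0 θ = θ) :
    (fun θ => U 1 θ - V 1 θ - c * (θ - π) ^ n) =o[𝓝 π] (fun x => (x - π) ^ n) := by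
  obtain ⟨K1, hK10, hK1⟩ := vf_lin hB hB0
  obtain ⟨K2, hK20, hK2⟩ := vf_lin hP hP0
  have dB : HasDerivAt (vf B) 0 π := by simpa [hB1] using vf_hasDerivAt hB π
  have dP : HasDerivAt (vf P) 0 π := by simpa [hP1] using vf_hasDerivAt hP π
  refine compare (K := max K1 K2) hn (le_max_of_le_left hK10)
    (fun x => (hK1 x).trans (by gcongr; exact le_max_left _ _))
    (fun x => (hK2 x).trans (by gcongr; exact le_max_right _ _)) ?_ dP ?_ hU hV hU0 hV0
  · exact ((vf_smooth hB).contDiffAt.hasStrictDerivAt' dB (by simp))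
  · have hs : HasDerivAt (fun θ : ℝ => Real.sin (θ - π)) 1 π := by
      simpa using ((hasDerivAt_id π).sub_const π).sin
    have ht : Tendsto (fun θ : ℝ => Real.sin (θ - π)) (𝓝 π) (𝓝 0) := by
      simpa using hs.continuousAt.tendsto
    have hso : (fun θ : ℝ => Real.sin (θ - π) - (θ - π)) =o[𝓝 π] (fun θ => θ - π) := by
      simpa using hasDerivAt_iff_isLittleO.1 hs
    have hsO : (fun θ : ℝ => Real.sin (θ - π)) =O[𝓝 π] (fun θ => θ - π) := by
      have := hso.isBigO.add (Asymptotics.isBigO_refl (fun θ => θ - π) (𝓝 π))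
      simpa using this
    have h1 := (hk.comp_tendsto ht).trans_isBigO (hsO.pow n)
    have h2 : (fun θ : ℝ => Real.sin (θ - π) ^ n - (θ - π) ^ n) =o[𝓝 π] (fun θ => (θ - π) ^ n) := by
      have hsum : (fun θ : ℝ => ∑ i ∈ Finset.range n,
          Real.sin (θ - π) ^ i * (θ - π) ^ (n - 1 - i)) =O[𝓝 π] (fun θ => (θ - π) ^ (n - 1)) := by
        apply Asymptotics.IsBigO.fun_sum
        intro i hi
        have hi' := Finset.mem_range.1 hi
        refine ((hsO.pow i).mul (Asymptotics.isBigO_refl (fun θ : ℝ => (θ - π) ^ (n - 1 - i)) (𝓝 π))).congr_right ?_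
        intro θ
        rw [← pow_add]; congr 1; omega
      refine (hsum.mul_isLittleO hso).congr ?_ ?_
      · intro θ; exact (Commute.all _ _).geom_sum₂_mul n
      · intro θ; rw [← pow_succ]; congr 1; omega
    refine (h1.add (h2.const_mul_left c)).congr_left ?_
    intro θ
    simp only [Function.comp, vf]
    ring

lemma exists_rec (F : ℕ → (ℕ → ℝ) → ℝ) (hF : ∀ n b b', (∀ m < n, b m = b' m) → F n b = F n b') :
    ∃ b : ℕ → ℝ, ∀ n, b n = F n b := by
  let H : ∀ n : ℕ, (∀ m, m < n → ℝ) → ℝ := fun n r => F n (fun m => if h : m < n then r m h else 0)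
  refine ⟨fun n => WellFounded.fix Nat.lt_wfRel.wf H n, fun n => ?_⟩
  simp only
  rw [WellFounded.fix_eq]
  apply hF
  intro m hm
  exact dif_pos hm

noncomputable def pol (b : ℕ → ℝ) (n : ℕ) (x : ℝ) : ℝ := ∑ j ∈ Finset.range n, b j * x ^ j

lemma pol_smooth (b : ℕ → ℝ) (n : ℕ) : ContDiff ℝ (⊤ : ℕ∞) (pol b n) := by
  unfold pol; fun_prop

lemma pol_zero {b : ℕ → ℝ} (h0 : b 0 = 0) (n : ℕ) : pol b n 0 = 0 := by
  apply Finset.sum_eq_zero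
  intro j _
  rcases j with _ | j
  · simp [h0]
  · simp

lemma pol_deriv {b : ℕ → ℝ} (h1 : b 1 = 0) (n : ℕ) : deriv (pol b n) 0 = 0 := by
  have : HasDerivAt (pol b n) (∑ j ∈ Finset.range n, b j * (j * (0:ℝ) ^ (j - 1))) 0 := by
    apply HasDerivAt.fun_sum
    intro j _
    exact (hasDerivAt_pow j (0:ℝ)).const_mul (b j)
  rw [this.deriv]
  apply Finset.sum_eq_zero
  intro j _
  rcases j with _ | _ | j
  · simp
  · simp [h1]
  · simp

end

end S13

/-- Lemma A.2: any prescribed sequence `(λ_n)_{n≥2}` of higher derivatives at the fixed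
point `π` is realized by the time-one flow of some smooth `2π`-periodic vector field `g`
vanishing to first order at `π`. -/
theorem stmt_13 (lam : ℕ → ℝ) :
    ∃ (g : ℝ → ℝ) (φ : ℝ → ℝ → ℝ),
      ContDiff ℝ (⊤ : ℕ∞) g ∧ ContDiff ℝ (⊤ : ℕ∞) (Function.uncurry φ) ∧ (∀ θ : ℝ, g (θ + 2 * π) = g θ) ∧
      g π = 0 ∧ deriv g π = 0 ∧
      (∀ t θ : ℝ, HasDerivAt (fun s => φ s θ) (g (φ t θ)) t) ∧
      (∀ θ : ℝ, φ 0 θ = θ) ∧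
      φ 1 π = π ∧ deriv (φ 1) π = 1 ∧
      (∀ n : ℕ, 2 ≤ n → iteratedDeriv n (φ 1) π = lam n) := by
  classical
  choose! Φ hΦs hΦd hΦ0 using S13.vf_flow
  obtain ⟨b, hb⟩ := S13.exists_rec (fun n b => if n < 2 then 0 else
    (lam n - iteratedDeriv n (Φ (S13.pol b n) 1) π) / n.factorial) (by
      intro n b b' h
      have : S13.pol b n = S13.pol b' n := by
        ext x
        exact Finset.sum_congr rfl fun j hj => by rw [h j (Finset.mem_range.1 hj)]
      simp only [this])
  have hb0 : b 0 = 0 := by rw [hb]; simp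
  have hb1 : b 1 = 0 := by rw [hb]; simp
  obtain ⟨B, hB, hBo⟩ := S13.borel b
  have hB0 : B 0 = 0 := by
    have h := hBo 0
    simp only [zero_add, Finset.range_one, Finset.sum_singleton, hb0, zero_mul, sub_zero,
      pow_zero, Asymptotics.isLittleO_one_iff] at h
    exact tendsto_nhds_unique (hB.continuous.tendsto 0) h
  have hBd : HasDerivAt B 0 0 := by
    rw [hasDerivAt_iff_isLittleO]
    have h := hBo 1
    simpa [Finset.sum_range_succ, hb0, hb1, hB0] using h
  have hB1 := hBd.deriv
  have hz : ContDiff ℝ (⊤ : ℕ∞) (fun _ : ℝ => (0:ℝ)) := contDiff_const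
  have hφ1s : ∀ A : ℝ → ℝ, ContDiff ℝ (⊤ : ℕ∞) A → ContDiff ℝ (⊤ : ℕ∞) (Φ A 1) := fun A hA =>
    (hΦs A hA).comp (contDiff_const.prodMk contDiff_id)
  have hfix : Φ B 1 π = π := by
    obtain ⟨K, hK0, hK⟩ := S13.vf_lin hB hB0
    have := S13.traj_bound hK0 hK (fun t => hΦd B hB t π) 1 (by simp)
    rw [hΦ0 B hB] at this
    simp only [sub_self, abs_zero, mul_zero, abs_nonpos_iff] at this
    linarith
  refine ⟨S13.vf B, Φ B, S13.vf_smooth hB, hΦs B hB, ?_, ?_, ?_, hΦd B hB, hΦ0 B hB, hfix, ?_, ?_⟩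
  · intro θ
    have : θ + 2 * π - π = (θ - π) + 2 * π := by ring
    simp only [S13.vf, this, Real.sin_add_two_pi]
  · simp [S13.vf, hB0]
  · rw [(S13.vf_hasDerivAt hB π).deriv]; simp [hB1]
  · have h := S13.vf_compare (c := 0) (n := 1) le_rfl hB hz hB0 rfl hB1 (by simp)
      (by simpa [Finset.sum_range_succ, hb0, hb1] using hBo 1) (V := fun _ θ => θ)
      (hΦd B hB) (fun t θ => by simpa [S13.vf] using hasDerivAt_const t θ) (hΦ0 B hB) (fun _ => rfl)
    apply HasDerivAt.deriv
    rw [hasDerivAt_iff_isLittleO]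
    refine h.congr ?_ ?_
    · intro θ; simp [hfix]
    · intro θ; simp
  · intro n hn
    have h := S13.vf_compare (c := b n) (n := n) (by omega) hB (S13.pol_smooth b n) hB0
      (S13.pol_zero hb0 n) hB1 (S13.pol_deriv hb1 n)
      ((hBo n).congr_left (fun x => by rw [Finset.sum_range_succ, S13.pol]; ring))
      (hΦd B hB) (hΦd _ (S13.pol_smooth b n)) (hΦ0 B hB) (hΦ0 _ (S13.pol_smooth b n))
    have s1 := hφ1s B hB
    have s2 := hφ1s _ (S13.pol_smooth b n)
    have h1 := S13.jet_eq (s1.sub s2) h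
    have h2 : iteratedDeriv n (fun x => Φ B 1 x - Φ (S13.pol b n) 1 x) π = _ :=
      iteratedDeriv_fun_sub (s1.contDiffAt.of_le (by exact_mod_cast le_top))
        (s2.contDiffAt.of_le (by exact_mod_cast le_top))
    have h3 : b n = (lam n - iteratedDeriv n (Φ (S13.pol b n) 1) π) / n.factorial := by
      have := hb n
      rwa [if_neg (by omega)] at this
    have hf : (n.factorial : ℝ) ≠ 0 := by positivity
    rw [eq_div_iff hf] at h3
    have h4 := h2.symm.trans h1
    linarith
end

section
/- Let γ : ℝ → ℝ be a strictly increasing continuously differentiable bijection with γ(θ+2π) = γ(θ)+2π for all θ, γ(π) = π and γ'(π) = 1, which is infinitely differentiable on ℝ ∖ (π + 2πℤ) and whose one-sided derivatives of all orders exist at π. Then there exist: a 2π-periodic function g : ℝ → ℝ which is continuously differentiable on ℝ, infinitely differentiable on ℝ ∖ (π + 2πℤ) and has one-sided derivatives of all orders at π; a map φ : ℝ × ℝ → ℝ with ∂_t φ(t,θ) = g(φ(t,θ)) and φ(0,θ) = θ for all t, θ; and a smooth strictly increasing bijection γ̲ : ℝ → ℝ with γ̲(θ+2π) = γ̲(θ)+2π,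 such that γ(θ) = φ(1, γ̲(θ)) for all θ ∈ ℝ. -/
open scoped Real

/-- `f` has one-sided derivatives of all orders at `π`, in the sense that all its
iterated derivatives admit one-sided limits at `π`. -/
def OneSidedSmoothAtPi (f : ℝ → ℝ) : Prop :=
  ∃ dp dm : ℕ → ℝ, ∀ k : ℕ,
    Filter.Tendsto (iteratedDeriv k f) (nhdsWithin π (Set.Ioi π)) (nhds (dp k)) ∧
    Filter.Tendsto (iteratedDeriv k f) (nhdsWithin π (Set.Iio π)) (nhds (dm k))

section Aux
open Real

noncomputable def ff (t θ : ℝ) : ℝ :=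
  θ + 2 * arctan ((exp t - 1) * sin θ / ((1 + cos θ) + exp t * (1 - cos θ)))

lemma ff_den (t θ : ℝ) : 0 < (1 + cos θ) + exp t * (1 - cos θ) := by
  have h1 := neg_one_le_cos θ
  have h2 := cos_le_one θ
  have h3 := exp_pos t
  rcases eq_or_lt_of_le h1 with h | h
  · rw [← h]; nlinarith
  · have := mul_nonneg h3.le (sub_nonneg.2 h2); linarith

lemma sin_two_arctan (z : ℝ) : sin (2 * arctan z) = 2 * z / (1 + z ^ 2) := by
  rw [sin_two_mul, sin_arctan, cos_arctan]
  have : 0 < 1 + z ^ 2 := by positivity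
  have h := mul_self_sqrt this.le
  have h0 : 0 < √(1 + z ^ 2) := sqrt_pos.2 this
  field_simp
  rw [sq_sqrt this.le]

lemma cos_two_arctan (z : ℝ) : cos (2 * arctan z) = (1 - z ^ 2) / (1 + z ^ 2) := by
  rw [cos_two_mul, cos_sq_arctan]
  have : 0 < 1 + z ^ 2 := by positivity
  field_simp
  ring

lemma ff_hasDerivAt (t θ : ℝ) : HasDerivAt (fun s => ff s θ) (sin (ff t θ)) t := by
  have hD := ff_den t θ
  have h1 : HasDerivAt (fun s => (exp s - 1) * sin θ) (exp t * sin θ) t :=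
    ((Real.hasDerivAt_exp t).sub_const 1).mul_const _
  have h2 : HasDerivAt (fun s => (1 + cos θ) + exp s * (1 - cos θ)) (exp t * (1 - cos θ)) t :=
    ((Real.hasDerivAt_exp t).mul_const _).const_add _
  have h3 := (((h1.div h2 hD.ne').arctan).const_mul 2).const_add θ
  have : sin (ff t θ) = 2 * (1 / (1 + ((exp t - 1) * sin θ / ((1 + cos θ) + exp t * (1 - cos θ))) ^ 2) *
    ((exp t * sin θ * ((1 + cos θ) + exp t * (1 - cos θ)) - (exp t - 1) * sin θ * (exp t * (1 - cos θ)))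
      / ((1 + cos θ) + exp t * (1 - cos θ)) ^ 2)) := by
    unfold ff
    rw [sin_add, sin_two_arctan, cos_two_arctan]
    have hs := sin_sq_add_cos_sq θ
    generalize sin θ = s at *
    generalize cos θ = c at *
    generalize exp t = e at *
    have hp : 0 < (1 + c + e * (1 - c)) ^ 2 + ((e - 1) * s) ^ 2 := by positivity
    have hp' : 0 < 1 + ((e - 1) * s / (1 + c + e * (1 - c))) ^ 2 := by positivity
    field_simp
    rw [← sub_eq_zero]
    have : s ^ 2 = 1 - c ^ 2 := by linarith
    ring_nf
    simp only [show s ^ 3 = s * s^2 by ring, this]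
    ring
  rw [this]
  exact h3

lemma ff_zero (θ : ℝ) : ff 0 θ = θ := by simp [ff]

lemma sol_unique {x y : ℝ → ℝ} (hx : ∀ t, HasDerivAt x (sin (x t)) t)
    (hy : ∀ t, HasDerivAt y (sin (y t)) t) {t0 : ℝ} (h : x t0 = y t0) : x = y := by
  have hl : LipschitzWith 1 Real.sin := by
    apply lipschitzWith_of_nnnorm_deriv_le Real.differentiable_sin
    intro x
    rw [Real.deriv_sin, ← NNReal.coe_le_coe]
    simpa using Real.abs_cos_le_one x
  exact ODE_solution_unique_univ (v := fun _ x => sin x) (s := fun _ => Set.univ) (K := 1) (t₀ := t0)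
    (fun t => hl.lipschitzOnWith) (fun t => ⟨hx t, trivial⟩) (fun t => ⟨hy t, trivial⟩) h

lemma ff_add (s t θ : ℝ) : ff s (ff t θ) = ff (s + t) θ := by
  have := sol_unique (x := fun s => ff s (ff t θ)) (y := fun s => ff (s + t) θ)
    (fun s => ff_hasDerivAt s _) (fun s => (ff_hasDerivAt (s + t) θ).comp_add_const s t) (t0 := 0)
    (by simp [ff_zero])
  exact congrFun this s

lemma ff_arctan (t y : ℝ) : ff t (π + 2 * arctan y) = π + 2 * arctan (exp (-t) * y) := by
  have := sol_unique (x := fun s => ff s (π + 2 * arctan y)) (y := fun s => π + 2 * arctan (exp (-s) * y))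
    (fun s => ff_hasDerivAt s _) (fun s => by
      have h1 : HasDerivAt (fun s => exp (-s) * y) (exp (-s) * (-1) * y) s :=
        ((hasDerivAt_neg s).exp).mul_const y
      have h2 := ((h1.arctan).const_mul 2).const_add π
      refine h2.congr_deriv ?_
      symm
      rw [add_comm π, sin_add_pi, sin_two_arctan]
      ring) (t0 := 0)
    (by simp [ff_zero])
  exact congrFun this t

lemma ff_pi (t : ℝ) : ff t π = π := by simp [ff]

lemma ff_per (t θ : ℝ) : ff t (θ + 2 * π) = ff t θ + 2 * π := by
  simp only [ff, sin_add_two_pi, cos_add_two_pi]; ring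

lemma ff_smooth (t : ℝ) : ContDiff ℝ (⊤ : ℕ∞) (ff t) := by
  unfold ff
  refine contDiff_id.add (contDiff_const.mul (ContDiff.arctan (ContDiff.div ?_ ?_ ?_)))
  · exact contDiff_const.mul Real.contDiff_sin
  · exact (contDiff_const.add Real.contDiff_cos).add (contDiff_const.mul (contDiff_const.sub Real.contDiff_cos))
  · exact fun θ => (ff_den t θ).ne'

lemma ff_bij (t : ℝ) : Function.Bijective (ff t) :=
  Function.bijective_iff_has_inverse.2 ⟨ff (-t), fun x => by simp [ff_add, ff_zero],
    fun x => by simp [ff_add, ff_zero]⟩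

lemma ff_mono (t : ℝ) : StrictMono (ff t) := by
  rcases (ff_smooth t).continuous.strictMono_of_inj (ff_bij t).1 with h | h
  · exact h
  · have := h (show (0:ℝ) < 0 + 2 * π by positivity)
    rw [ff_per] at this
    have := pi_pos
    linarith

lemma ff_deriv_pi (t : ℝ) : HasDerivAt (ff t) (exp (-t)) π := by
  have h1 : HasDerivAt (fun θ => (exp t - 1) * sin θ) ((exp t - 1) * cos π) π :=
    (hasDerivAt_sin π).const_mul _
  have h2 : HasDerivAt (fun θ => (1 + cos θ) + exp t * (1 - cos θ)) (-sin π + exp t * -(-sin π)) π :=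
    ((hasDerivAt_cos π).const_add _).add (((hasDerivAt_cos π).const_sub _).const_mul _)
  have h3 := (hasDerivAt_id π).add (((h1.div h2 (ff_den t π).ne').arctan).const_mul 2)
  refine h3.congr_deriv ?_
  simp [exp_neg]
  field_simp
  ring

lemma exists_prim {a b : ℝ} (hab : a ≤ b) {w : ℝ → ℝ} (hw : ContinuousOn w (Set.Icc a b)) (c y0 : ℝ) :
    ∃ V : ℝ → ℝ, V c = y0 ∧ ∀ x ∈ Set.Icc a b, HasDerivWithinAt V (w x) (Set.Icc a b) x := by
  let e : ℝ → ℝ := Set.IccExtend hab (Set.domRestrict (Set.Icc a b) w)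
  have he : Continuous e := (continuousOn_iff_continuous_domRestrict.1 hw).Icc_extend'
  refine ⟨fun x => y0 + ∫ t in c..x, e t, by simp, fun x hx => ?_⟩
  have h := (intervalIntegral.integral_hasDerivAt_right (he.intervalIntegrable c x)
    (he.stronglyMeasurableAtFilter _ _) he.continuousAt).const_add y0
  have : e x = w x := by
    simp only [e]; rw [Set.IccExtend_of_mem _ _ hx]; rfl
  rw [this] at h
  exact h.hasDerivWithinAt

lemma contDiffOn_succ_of {s : Set ℝ} (hs : UniqueDiffOn ℝ s) {f f' : ℝ → ℝ} {n : ℕ}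
    (hf : ∀ x ∈ s, HasDerivWithinAt f (f' x) s x) (hf' : ContDiffOn ℝ n f' s) :
    ContDiffOn ℝ ((n + 1 : ℕ) : WithTop ℕ∞) f s := by
  push_cast
  rw [contDiffOn_succ_iff_derivWithin hs]
  refine ⟨fun x hx => (hf x hx).differentiableWithinAt, by simp, hf'.congr fun x hx => ?_⟩
  exact (hf x hx).derivWithin (hs x hx)

lemma contDiffOn_top_of {s : Set ℝ} (hs : UniqueDiffOn ℝ s) {f f' : ℝ → ℝ}
    (hf : ∀ x ∈ s, HasDerivWithinAt f (f' x) s x) (hf' : ContDiffOn ℝ (⊤ : ℕ∞) f' s) :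
    ContDiffOn ℝ (⊤ : ℕ∞) f s := by
  rw [contDiffOn_infty] at hf' ⊢
  intro n
  exact (contDiffOn_succ_of hs hf (hf' n)).of_le (by exact_mod_cast Nat.le_succ n)

lemma top_derivWithin {s : Set ℝ} (hs : UniqueDiffOn ℝ s) {f : ℝ → ℝ} (hf : ContDiffOn ℝ (⊤ : ℕ∞) f s) :
    ContDiffOn ℝ (⊤ : ℕ∞) (derivWithin f s) s :=
  hf.derivWithin hs (by simp)

lemma coh_exists {a b : ℝ} (hab : a ≤ b) {F B c : ℝ → ℝ} (hF : ContinuousOn F (Set.Icc a b))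
    (hFm : Set.MapsTo F (Set.Icc a b) (Set.Icc a b)) (hB : ContinuousOn B (Set.Icc a b))
    (hc : ContinuousOn c (Set.Icc a b)) (hB2 : ∀ x ∈ Set.Icc a b, |B x| ≤ 1 / 2) :
    ∃ v : ℝ → ℝ, ContinuousOn v (Set.Icc a b) ∧ ∀ x ∈ Set.Icc a b, v x = B x * v (F x) + c x := by
  let S := Set.Icc a b
  let F' : C(S, S) := ⟨hFm.restrict F S S, hF.mapsToRestrict hFm⟩
  let B' : C(S, ℝ) := ⟨S.domRestrict B, continuousOn_iff_continuous_domRestrict.1 hB⟩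
  let c' : C(S, ℝ) := ⟨S.domRestrict c, continuousOn_iff_continuous_domRestrict.1 hc⟩
  let T : C(S, ℝ) → C(S, ℝ) := fun v => B' * v.comp F' + c'
  have hT : ContractingWith (1/2) T := by
    refine ⟨by rw [← NNReal.coe_lt_coe]; norm_num, LipschitzWith.of_dist_le_mul fun v w => ?_⟩
    rw [ContinuousMap.dist_le (by positivity)]
    intro x
    have h1 := ContinuousMap.dist_apply_le_dist (f := v) (g := w) (F' x)
    have h2 := hB2 x x.2
    simp only [T, ContinuousMap.add_apply, ContinuousMap.mul_apply, ContinuousMap.comp_apply, dist_add_right,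
      Real.dist_eq] at h1 ⊢
    rw [← mul_sub, abs_mul]
    push_cast
    exact mul_le_mul h2 h1 (abs_nonneg _) (by norm_num)
  let v := ContractingWith.fixedPoint T hT
  have hv : T v = v := hT.fixedPoint_isFixedPt
  refine ⟨Set.IccExtend hab v, (v.continuous.Icc_extend').continuousOn, fun x hx => ?_⟩
  rw [Set.IccExtend_of_mem _ _ hx, Set.IccExtend_of_mem _ _ (hFm hx)]
  conv_lhs => rw [← hv]
  rfl

lemma pow_bound {p : ℝ} (h0 : 0 < p) (h1 : p ≤ 1 / 2) (k : ℕ) : ((k + 1 : ℕ) : ℝ) * p ^ k ≤ 1 := by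
  induction k with
  | zero => simp
  | succ k ih =>
    have : 0 ≤ ((k : ℝ) + 1) * p ^ k := by positivity
    push_cast at *
    have e : ((k : ℝ) + 1 + 1) * p ^ (k + 1) = (((k : ℝ) + 1) * p ^ k) * p + p ^ k * p := by ring
    have h2 : p ^ k ≤ 1 := pow_le_one₀ h0.le (by linarith)
    have h3 : p ^ k * p ≤ 1 * (1/2) := mul_le_mul h2 h1 h0.le (by norm_num)
    have h4 : (((k : ℝ) + 1) * p ^ k) * p ≤ 1 * (1/2) := mul_le_mul ih h1 h0.le (by norm_num)
    linarith

lemma coh_reg {a b c B : ℝ} (hab : a < b) (hcS : c ∈ Set.Icc a b) {F p q : ℝ → ℝ}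
    (hFm : Set.MapsTo F (Set.Icc a b) (Set.Icc a b)) (hFc : F c = c)
    (hF : ContDiffOn ℝ (⊤ : ℕ∞) F (Set.Icc a b))
    (hp : ContDiffOn ℝ (⊤ : ℕ∞) p (Set.Icc a b))
    (hq : ContDiffOn ℝ (⊤ : ℕ∞) q (Set.Icc a b))
    (hFp : ∀ x ∈ Set.Icc a b, HasDerivWithinAt F (p x) (Set.Icc a b) x)
    (hpq : ∀ x ∈ Set.Icc a b, HasDerivWithinAt p (q x) (Set.Icc a b) x)
    (hp0 : ∀ x ∈ Set.Icc a b, 0 < p x) (hp1 : ∀ x ∈ Set.Icc a b, p x ≤ 1 / 2)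
    (hB : ∀ x ∈ Set.Icc a b, |q x| ≤ B) (hB1 : B * (b - a) ≤ 1 / 4) (n : ℕ) :
    ∀ (k : ℕ) (h v : ℝ → ℝ), ContDiffOn ℝ n h (Set.Icc a b) → ContinuousOn v (Set.Icc a b) →
      (∀ x ∈ Set.Icc a b, v x = p x ^ (k + 1) * v (F x) + h x) → ContDiffOn ℝ n v (Set.Icc a b) := by
  have hU : UniqueDiffOn ℝ (Set.Icc a b) := uniqueDiffOn_Icc hab
  have hB0 : 0 ≤ B := (abs_nonneg _).trans (hB c hcS)
  have hpk : ∀ x ∈ Set.Icc a b, ∀ k : ℕ, |p x ^ (k + 1)| ≤ 1 / 2 := by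
    intro x hx k
    have h0 := hp0 x hx
    rw [abs_of_pos (by positivity), pow_succ]
    have h2 : p x ^ k ≤ 1 := pow_le_one₀ h0.le (by linarith [hp1 x hx])
    nlinarith [hp1 x hx, pow_pos h0 k]
  induction n with
  | zero =>
    intro k h v _ hv _
    simpa [contDiffOn_zero] using hv
  | succ n ih =>
    intro k h v hh hv hvE
    have hvn : ContDiffOn ℝ n v (Set.Icc a b) :=
      ih k h v (hh.of_le (by exact_mod_cast Nat.le_succ n)) hv hvE
    have hFn : ContDiffOn ℝ n F (Set.Icc a b) := contDiffOn_infty.1 hF n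
    have hpn : ContDiffOn ℝ n p (Set.Icc a b) := contDiffOn_infty.1 hp n
    have hqn : ContDiffOn ℝ n q (Set.Icc a b) := contDiffOn_infty.1 hq n
    have hh' : ContDiffOn ℝ n (derivWithin h (Set.Icc a b)) (Set.Icc a b) :=
      hh.derivWithin hU (by push_cast; exact le_rfl)
    have hhd : ∀ x ∈ Set.Icc a b, HasDerivWithinAt h (derivWithin h (Set.Icc a b) x) (Set.Icc a b) x :=
      fun x hx => ((hh.differentiableOn (by simp)) x hx).hasDerivWithinAt
    let h1 : ℝ → ℝ := fun x => derivWithin h (Set.Icc a b) x + ((k + 1 : ℕ) : ℝ) * p x ^ k * q x * v (F x)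
    have hh1 : ContDiffOn ℝ n h1 (Set.Icc a b) :=
      hh'.add (((contDiffOn_const.mul (hpn.pow k)).mul hqn).mul (hvn.comp hFn hFm))
    obtain ⟨w, hw, hwE⟩ := coh_exists hab.le hF.continuousOn hFm (B := fun x => p x ^ (k + 1 + 1)) (c := h1)
      (hp.continuousOn.pow _) hh1.continuousOn (fun x hx => hpk x hx (k + 1))
    have hwn : ContDiffOn ℝ n w (Set.Icc a b) := ih (k + 1) h1 w hh1 hw hwE
    obtain ⟨V, hVc, hV⟩ := exists_prim hab.le hw c (v c)
    have hVn := contDiffOn_succ_of hU hV hwn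
    have hVcont : ContinuousOn V (Set.Icc a b) := hVn.continuousOn
    -- `d = v - V` vanishes
    obtain ⟨x0, hx0, hmax⟩ := isCompact_Icc.exists_isMaxOn ⟨c, hcS⟩ ((hv.sub hVcont).abs)
    have hmax' : ∀ x ∈ Set.Icc a b, |v x - V x| ≤ |v x0 - V x0| := fun x hx => hmax hx
    set M := |v x0 - V x0| with hM
    have hM0 : 0 ≤ M := abs_nonneg _
    let r : ℝ → ℝ := fun x => V x - (p x ^ (k + 1) * V (F x) + h x)
    have hr : ∀ x ∈ Set.Icc a b, HasDerivWithinAt r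
        (((k + 1 : ℕ) : ℝ) * p x ^ k * q x * (v (F x) - V (F x))) (Set.Icc a b) x := by
      intro x hx
      have e1 : HasDerivWithinAt (fun x => V (F x)) (w (F x) * p x) (Set.Icc a b) x :=
        (hV (F x) (hFm hx)).comp x (hFp x hx) hFm
      have e2 := ((hpq x hx).pow (k + 1)).mul e1
      refine ((hV x hx).sub (e2.add (hhd x hx))).congr_deriv ?_
      rw [hwE x hx]
      simp only [h1, Nat.add_sub_cancel, Pi.pow_apply]
      ring
    have hrb := Convex.norm_image_sub_le_of_norm_hasDerivWithin_le (C := B * M) hr (fun x hx => by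
      rw [Real.norm_eq_abs, abs_mul, abs_mul]
      have h2 : |((k + 1 : ℕ) : ℝ) * p x ^ k| ≤ 1 := by
        have h0 := hp0 x hx
        rw [abs_of_nonneg (by positivity)]
        exact pow_bound (hp0 x hx) (hp1 x hx) k
      have h3 : |((k + 1 : ℕ) : ℝ) * p x ^ k| * |q x| ≤ 1 * B :=
        mul_le_mul h2 (hB x hx) (abs_nonneg _) (by norm_num)
      rw [one_mul] at h3
      exact mul_le_mul h3 (hmax' _ (hFm hx)) (abs_nonneg _) hB0) (convex_Icc a b) hcS hx0
    have hrc : r c = 0 := by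
      have := hvE c hcS
      simp only [r, hFc, hVc] at this ⊢
      linarith
    rw [hrc, sub_zero, Real.norm_eq_abs, Real.norm_eq_abs] at hrb
    have hx0c : |x0 - c| ≤ b - a := by
      rw [abs_le]; constructor <;> linarith [hx0.1, hx0.2, hcS.1, hcS.2]
    have hr4 : |r x0| ≤ M / 4 := by
      calc |r x0| ≤ B * M * |x0 - c| := hrb
        _ ≤ B * M * (b - a) := by gcongr
        _ = (B * (b - a)) * M := by ring
        _ ≤ 1 / 4 * M := by gcongr
        _ = M / 4 := by ring
    have hd : v x0 - V x0 = p x0 ^ (k + 1) * (v (F x0) - V (F x0)) - r x0 := by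
      simp only [r]
      rw [hvE x0 hx0]; ring
    have hM' : M ≤ M / 2 + M / 4 := by
      calc M = |p x0 ^ (k + 1) * (v (F x0) - V (F x0)) - r x0| := by rw [hM, hd]
        _ ≤ |p x0 ^ (k + 1) * (v (F x0) - V (F x0))| + |r x0| := abs_sub _ _
        _ ≤ 1 / 2 * M + M / 4 := by
          rw [abs_mul]
          gcongr
          · exact hpk x0 hx0 k
          · exact hmax' _ (hFm hx0)
        _ = _ := by ring
    have hMz : M = 0 := by linarith
    refine hVn.congr fun x hx => ?_
    have := hmax' x hx
    rw [hMz] at this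
    have := abs_nonpos_iff.1 this
    linarith

lemma koenigs_small {a b c B : ℝ} (hab : a < b) (hcS : c ∈ Set.Icc a b) {F p q : ℝ → ℝ}
    (hFc : F c = c)
    (hF : ContDiffOn ℝ (⊤ : ℕ∞) F (Set.Icc a b))
    (hp : ContDiffOn ℝ (⊤ : ℕ∞) p (Set.Icc a b))
    (hq : ContDiffOn ℝ (⊤ : ℕ∞) q (Set.Icc a b))
    (hFp : ∀ x ∈ Set.Icc a b, HasDerivWithinAt F (p x) (Set.Icc a b) x)
    (hpq : ∀ x ∈ Set.Icc a b, HasDerivWithinAt p (q x) (Set.Icc a b) x)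
    (hp0 : ∀ x ∈ Set.Icc a b, 0 < p x) (hp1 : ∀ x ∈ Set.Icc a b, p x ≤ 1 / 2)
    (hB : ∀ x ∈ Set.Icc a b, |q x| ≤ B) (hB1 : B * (b - a) ≤ 1 / 4) :
    ∃ κ : ℝ → ℝ, ContDiffOn ℝ (⊤ : ℕ∞) κ (Set.Icc a b) ∧ κ c = 0 ∧
      HasDerivWithinAt κ 1 (Set.Icc a b) c ∧
      ∀ x ∈ Set.Icc a b, F x ∈ Set.Icc a b ∧ κ (F x) = p c * κ x := by
  have hU : UniqueDiffOn ℝ (Set.Icc a b) := uniqueDiffOn_Icc hab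
  have hconst : ∀ (f : ℝ → ℝ), (∀ x ∈ Set.Icc a b, HasDerivWithinAt f 0 (Set.Icc a b) x) →
      ∀ x ∈ Set.Icc a b, f x = f c := by
    intro f hf x hx
    have := Convex.norm_image_sub_le_of_norm_hasDerivWithin_le (C := 0) hf (fun x hx => by simp)
      (convex_Icc a b) hcS hx
    rw [zero_mul] at this
    exact sub_eq_zero.1 (norm_le_zero_iff.1 this)
  have hmono : MonotoneOn F (Set.Icc a b) := by
    apply monotoneOn_of_deriv_nonneg (convex_Icc a b) hF.continuousOn
    · exact (hF.differentiableOn (by simp)).mono interior_subset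
    · intro x hx
      have h1 := (hFp x (interior_subset hx)).hasDerivAt (mem_interior_iff_mem_nhds.1 hx)
      rw [h1.deriv]; exact (hp0 x (interior_subset hx)).le
  have hFm : Set.MapsTo F (Set.Icc a b) (Set.Icc a b) := by
    intro x hx
    have h1 := Convex.norm_image_sub_le_of_norm_hasDerivWithin_le (C := 1/2) hFp (fun x hx => by
      rw [Real.norm_eq_abs, abs_of_pos (hp0 x hx)]; exact hp1 x hx) (convex_Icc a b) hcS hx
    rw [hFc, Real.norm_eq_abs, Real.norm_eq_abs] at h1
    rcases le_total c x with h | h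
    · have := hmono hcS hx h
      rw [hFc] at this
      rw [abs_of_nonneg (sub_nonneg.2 this), abs_of_nonneg (sub_nonneg.2 h)] at h1
      constructor <;> linarith [hx.1, hx.2, hcS.1, hcS.2]
    · have := hmono hx hcS h
      rw [hFc] at this
      rw [abs_of_nonpos (sub_nonpos.2 this), abs_of_nonpos (sub_nonpos.2 h)] at h1
      constructor <;> linarith [hx.1, hx.2, hcS.1, hcS.2]
  have hqp : ContDiffOn ℝ (⊤ : ℕ∞) (fun x => q x / p x) (Set.Icc a b) := hq.div hp fun x hx => (hp0 x hx).ne'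
  obtain ⟨w, hw, hwE⟩ := coh_exists hab.le hF.continuousOn hFm (B := p) (c := fun x => q x / p x)
    hp.continuousOn hqp.continuousOn (fun x hx => by rw [abs_of_pos (hp0 x hx)]; exact hp1 x hx)
  have hwT : ContDiffOn ℝ (⊤ : ℕ∞) w (Set.Icc a b) := by
    rw [contDiffOn_infty]
    intro n
    refine coh_reg hab hcS hFm hFc hF hp hq hFp hpq hp0 hp1 hB hB1 n 0 _ w (contDiffOn_infty.1 hqp n) hw ?_
    simpa using hwE
  obtain ⟨u, huc, hu⟩ := exists_prim hab.le hw c 0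
  have huT := contDiffOn_top_of hU hu hwT
  have hue : ∀ x ∈ Set.Icc a b, u x = u (F x) + (log (p x) - log (p c)) := by
    have := hconst (fun x => u x - u (F x) - log (p x)) (fun x hx => by
      have e1 : HasDerivWithinAt (fun x => u (F x)) (w (F x) * p x) (Set.Icc a b) x :=
        (hu (F x) (hFm hx)).comp x (hFp x hx) hFm
      refine (((hu x hx).sub e1).sub ((hpq x hx).log (hp0 x hx).ne')).congr_deriv ?_
      rw [hwE x hx]; ring)
    intro x hx
    have := this x hx
    simp only [hFc] at this
    linarith
  have heT : ContDiffOn ℝ (⊤ : ℕ∞) (fun x => exp (u x)) (Set.Icc a b) := huT.exp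
  obtain ⟨κ, hκc, hκ⟩ := exists_prim hab.le heT.continuousOn c 0
  refine ⟨κ, contDiffOn_top_of hU hκ heT, hκc, by simpa [huc] using hκ c hcS, fun x hx => ⟨hFm hx, ?_⟩⟩
  have := hconst (fun x => κ (F x) - p c * κ x) (fun x hx => by
      have e1 : HasDerivWithinAt (fun x => κ (F x)) (exp (u (F x)) * p x) (Set.Icc a b) x :=
        (hκ (F x) (hFm hx)).comp x (hFp x hx) hFm
      refine (e1.sub ((hκ x hx).const_mul (p c))).congr_deriv ?_
      rw [hue x hx, exp_add, exp_sub, exp_log (hp0 x hx), exp_log (hp0 c hcS)]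
      have := hp0 c hcS
      field_simp
      ring) x hx
  simp only [hFc, hκc] at this
  linarith

lemma koenigs {a b c μ : ℝ} (hab : a < b) (hcS : c ∈ Set.Icc a b) {F : ℝ → ℝ}
    (hFc : F c = c) (hF : ContDiffOn ℝ (⊤ : ℕ∞) F (Set.Icc a b))
    (hμ : HasDerivWithinAt F μ (Set.Icc a b) c) (h0 : 0 < μ) (h1 : μ < 1 / 2) :
    ∃ δ > 0, ∀ a' b', a ≤ a' → a' ≤ c → c ≤ b' → b' ≤ b → a' < b' → c - a' ≤ δ → b' - c ≤ δ →
    ∃ κ : ℝ → ℝ, ContDiffOn ℝ (⊤ : ℕ∞) κ (Set.Icc a' b') ∧ κ c = 0 ∧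
      HasDerivWithinAt κ 1 (Set.Icc a' b') c ∧
      ∀ x ∈ Set.Icc a' b', F x ∈ Set.Icc a' b' ∧ κ (F x) = μ * κ x := by
  have hU : UniqueDiffOn ℝ (Set.Icc a b) := uniqueDiffOn_Icc hab
  set p := derivWithin F (Set.Icc a b) with hpdef
  set q := derivWithin p (Set.Icc a b) with hqdef
  have hp := top_derivWithin hU hF
  have hq := top_derivWithin hU hp
  have hpc : p c = μ := hμ.derivWithin (hU c hcS)
  obtain ⟨B, hB⟩ := isCompact_Icc.exists_bound_of_continuousOn hq.continuousOn
  have hB0 : 0 ≤ B := (norm_nonneg _).trans (hB c hcS)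
  have hev : ∀ᶠ x in nhdsWithin c (Set.Icc a b), p x ∈ Set.Ioo 0 (1/2 : ℝ) :=
    (hp.continuousOn c hcS) (by rw [← hpdef, hpc]; exact Ioo_mem_nhds h0 h1)
  obtain ⟨ε, hε, hεp⟩ := Metric.mem_nhdsWithin_iff.1 hev
  refine ⟨min (ε / 2) (1 / (8 * (B + 1))), by positivity, fun a' b' ha1 ha2 hb1 hb2 hab' hda hdb => ?_⟩
  have hsub : Set.Icc a' b' ⊆ Set.Icc a b := Set.Icc_subset_Icc ha1 hb2
  have hpI : ∀ x ∈ Set.Icc a' b', p x ∈ Set.Ioo 0 (1/2 : ℝ) := by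
    intro x hx
    refine hεp ⟨?_, hsub hx⟩
    rw [Metric.mem_ball, Real.dist_eq]
    have h2 := min_le_left (ε / 2) (1 / (8 * (B + 1)))
    rw [abs_lt]
    constructor <;> linarith [hx.1, hx.2]
  have := koenigs_small (B := B) hab' (c := c) ⟨ha2, hb1⟩ hFc (hF.mono hsub) (hp.mono hsub) (hq.mono hsub)
    (fun x hx => ((hF.differentiableOn (by simp)) x (hsub hx)).hasDerivWithinAt.mono hsub)
    (fun x hx => ((hp.differentiableOn (by simp)) x (hsub hx)).hasDerivWithinAt.mono hsub)
    (fun x hx => (hpI x hx).1) (fun x hx => (hpI x hx).2.le) (fun x hx => hB x (hsub hx)) (by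
      have h2 := min_le_right (ε / 2) (1 / (8 * (B + 1)))
      have h3 : b' - a' ≤ 2 * (1 / (8 * (B + 1))) := by linarith
      calc B * (b' - a') ≤ (B + 1) * (2 * (1 / (8 * (B + 1)))) := by
            apply mul_le_mul (by linarith) h3 (by linarith) (by linarith)
        _ = 1 / 4 := by field_simp; norm_num)
  rw [← hpdef, hpc] at this
  exact this

lemma uniqueDiffOn_insert {s : Set ℝ} {c : ℝ} (hso : IsOpen s) (hsc : Convex ℝ s) (hc : c ∈ closure s) :
    UniqueDiffOn ℝ (insert c s) := by
  intro x hx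
  have hne : s.Nonempty := by
    rcases s.eq_empty_or_nonempty with h | h
    · simp [h] at hc
    · exact h
  have hcl : x ∈ closure s := by
    rcases hx with rfl | hx
    · exact hc
    · exact subset_closure hx
  have h1 : UniqueDiffWithinAt ℝ s x :=
    uniqueDiffWithinAt_convex hsc (by rwa [hso.interior_eq]) hcl
  exact h1.mono (Set.subset_insert c s)

lemma extend_smooth {s : Set ℝ} {c : ℝ} {f : ℝ → ℝ} {d : ℕ → ℝ} (hso : IsOpen s) (hsc : Convex ℝ s)
    (hc : c ∈ closure s) (hcs : c ∉ s) (hf : ContDiffOn ℝ (⊤ : ℕ∞) f s) (hfc : ContinuousAt f c)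
    (hside : (s ∈ nhdsWithin c (Set.Ioi c) ∧ s ⊆ Set.Ioi c) ∨ (s ∈ nhdsWithin c (Set.Iio c) ∧ s ⊆ Set.Iio c))
    (hd : ∀ k, Filter.Tendsto (iteratedDeriv k f) (nhdsWithin c s) (nhds (d k))) :
    ContDiffOn ℝ (⊤ : ℕ∞) f (insert c s) := by
  classical
  have hU := uniqueDiffOn_insert hso hsc hc
  have : (nhdsWithin c s).NeBot := mem_closure_iff_nhdsWithin_neBot.1 hc
  let D : ℕ → ℝ → ℝ := fun k => Function.update (iteratedDeriv k f) c (d k)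
  have hDs : ∀ k, ∀ x ∈ s, D k x = iteratedDeriv k f x := by
    intro k x hx
    exact Function.update_of_ne (by rintro rfl; exact hcs hx) _ _
  have hDc : ∀ k, D k c = d k := fun k => Function.update_self _ _ _
  have hEq : ∀ k, ∀ x ∈ s, D k =ᶠ[nhds x] iteratedDeriv k f := fun k x hx => by
    filter_upwards [hso.mem_nhds hx] with y hy using hDs k y hy
  have hDder : ∀ k, ∀ x ∈ s, HasDerivAt (D k) (D (k + 1) x) x := by
    intro k x hx
    have h1 : ContDiffAt ℝ (⊤ : ℕ∞) f x := hf.contDiffAt (hso.mem_nhds hx)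
    have h2 : DifferentiableAt ℝ (iteratedDeriv k f) x := by
      have := (h1.contDiffWithinAt (s := Set.univ)).differentiableWithinAt_iteratedDerivWithin (m := k)
        (by exact_mod_cast WithTop.coe_lt_top k) (by simp)
      rwa [iteratedDerivWithin_univ, differentiableWithinAt_univ] at this
    rw [hDs (k + 1) x hx, iteratedDeriv_succ]
    exact h2.hasDerivAt.congr_of_eventuallyEq (hEq k x hx)
  have hDT : ∀ k, Filter.Tendsto (D k) (nhdsWithin c s) (nhds (D k c)) := by
    intro k
    rw [hDc]
    refine (hd k).congr' ?_
    filter_upwards [self_mem_nhdsWithin] with y hy using (hDs k y hy).symm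
  have hD : ∀ k, ∀ x ∈ insert c s, HasDerivWithinAt (D k) (D (k + 1) x) (insert c s) x := by
    intro k x hx
    rcases hx with rfl | hx
    · have hdiff : DifferentiableOn ℝ (D k) s :=
        fun y hy => (hDder k y hy).differentiableAt.differentiableWithinAt
      have hlim : Filter.Tendsto (fun y => deriv (D k) y) (nhdsWithin x s) (nhds (D (k + 1) x)) := by
        refine (hDT (k + 1)).congr' ?_
        filter_upwards [self_mem_nhdsWithin] with y hy using (hDder k y hy).deriv.symm
      rcases hside with ⟨hs1, hs2⟩ | ⟨hs1, hs2⟩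
      · refine (hasDerivWithinAt_Ici_of_tendsto_deriv hdiff (hDT k) hs1
          (hlim.mono_left (nhdsWithin_le_iff.2 hs1))).mono ?_
        exact Set.insert_subset Set.self_mem_Ici (hs2.trans Set.Ioi_subset_Ici_self)
      · refine (hasDerivWithinAt_Iic_of_tendsto_deriv hdiff (hDT k) hs1
          (hlim.mono_left (nhdsWithin_le_iff.2 hs1))).mono ?_
        exact Set.insert_subset Set.self_mem_Iic (hs2.trans Set.Iio_subset_Iic_self)
    · exact (hDder k x hx).hasDerivWithinAt
  have hind : ∀ n : ℕ, ∀ k, ContDiffOn ℝ n (D k) (insert c s) := by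
    intro n
    induction n with
    | zero =>
      intro k
      rw [Nat.cast_zero, contDiffOn_zero]
      exact fun x hx => (hD k x hx).continuousWithinAt
    | succ n ih => intro k; exact contDiffOn_succ_of hU (hD k) (ih (k + 1))
  rw [contDiffOn_infty]
  intro n
  refine (hind n 0).congr fun x hx => ?_
  rcases hx with rfl | hx
  · rw [hDc]
    have := hd 0
    rw [iteratedDeriv_zero] at this
    exact tendsto_nhds_unique (hfc.tendsto.mono_left nhdsWithin_le_nhds) this
  · rw [hDs 0 x hx, iteratedDeriv_zero]

lemma limits_of_smooth {s : Set ℝ} {c : ℝ} {f : ℝ → ℝ} (hso : IsOpen s) (hsc : Convex ℝ s)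
    (hc : c ∈ closure s) (hf : ContDiffOn ℝ (⊤ : ℕ∞) f (insert c s)) (k : ℕ) :
    ∃ d, Filter.Tendsto (iteratedDeriv k f) (nhdsWithin c s) (nhds d) := by
  have hU := uniqueDiffOn_insert hso hsc hc
  have h1 := hf.continuousOn_iteratedDerivWithin (m := k) (by exact_mod_cast le_top) hU
  have h2 := (h1 c (Set.mem_insert c s)).mono_left (nhdsWithin_mono c (Set.subset_insert c s))
  refine ⟨_, h2.congr' ?_⟩
  filter_upwards [self_mem_nhdsWithin] with y hy
  have h3 : (insert c s : Set ℝ) ∈ nhds y := Filter.mem_of_superset (hso.mem_nhds hy) (Set.subset_insert c s)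
  rw [iteratedDerivWithin_eq_iteratedDeriv hU ?_ (Set.mem_insert_of_mem c hy)]
  exact (contDiffOn_infty.1 hf k).contDiffAt h3

lemma glue_C1 {a b c d : ℝ} {f : ℝ → ℝ} (hac : a < c) (hcb : c < b)
    (h1 : ContDiffOn ℝ (⊤ : ℕ∞) f (Set.Icc a c)) (h2 : ContDiffOn ℝ (⊤ : ℕ∞) f (Set.Icc c b))
    (d1 : HasDerivWithinAt f d (Set.Icc a c) c) (d2 : HasDerivWithinAt f d (Set.Icc c b) c) :
    ContDiffAt ℝ 1 f c ∧ HasDerivAt f d c ∧ ContinuousAt (deriv f) c := by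
  have hU1 : UniqueDiffOn ℝ (Set.Icc a c) := uniqueDiffOn_Icc hac
  have hU2 : UniqueDiffOn ℝ (Set.Icc c b) := uniqueDiffOn_Icc hcb
  have hdc : HasDerivAt f d c := by
    have := d1.union d2
    rw [Set.Icc_union_Icc_eq_Icc hac.le hcb.le] at this
    exact this.hasDerivAt (Icc_mem_nhds hac hcb)
  have hL : ∀ x ∈ Set.Ioc a c, HasDerivAt f (derivWithin f (Set.Icc a c) x) x := by
    intro x hx
    rcases eq_or_lt_of_le hx.2 with rfl | h
    · rw [d1.derivWithin (hU1 _ ⟨hac.le, le_rfl⟩)]; exact hdc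
    · exact ((h1.differentiableOn (by simp)) x ⟨hx.1.le, hx.2⟩).hasDerivWithinAt.hasDerivAt
        (Icc_mem_nhds hx.1 h)
  have hR : ∀ x ∈ Set.Ico c b, HasDerivAt f (derivWithin f (Set.Icc c b) x) x := by
    intro x hx
    rcases eq_or_lt_of_le hx.1 with rfl | h
    · rw [d2.derivWithin (hU2 _ ⟨le_rfl, hcb.le⟩)]; exact hdc
    · exact ((h2.differentiableOn (by simp)) x ⟨hx.1, hx.2.le⟩).hasDerivWithinAt.hasDerivAt
        (Icc_mem_nhds h hx.2)
  have hcont : ∀ x ∈ Set.Ioo a b, ContinuousAt (deriv f) x := by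
    have hcL : ContinuousOn (deriv f) (Set.Ioc a c) :=
      ((h1.continuousOn_derivWithin hU1 (by simp)).mono Set.Ioc_subset_Icc_self).congr
        fun x hx => (hL x hx).deriv
    have hcR : ContinuousOn (deriv f) (Set.Ico c b) :=
      ((h2.continuousOn_derivWithin hU2 (by simp)).mono Set.Ico_subset_Icc_self).congr
        fun x hx => (hR x hx).deriv
    intro x hx
    rcases lt_trichotomy x c with h | rfl | h
    · exact hcL.continuousAt (Ioc_mem_nhds hx.1 h)
    · have := (hcL x ⟨hx.1, le_rfl⟩).union (hcR x ⟨le_rfl, hx.2⟩)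
      rw [Set.Ioc_union_Ico_eq_Ioo hx.1 hx.2] at this
      exact this.continuousAt (Ioo_mem_nhds hx.1 hx.2)
    · exact hcR.continuousAt (Ico_mem_nhds h hx.2)
  have : ContDiffOn ℝ (0 + 1) f (Set.Ioo a b) := by
    rw [contDiffOn_succ_iff_deriv_of_isOpen isOpen_Ioo]
    refine ⟨fun x hx => ?_, by simp, ?_⟩
    · rcases le_total x c with h | h
      · exact (hL x ⟨hx.1, h⟩).differentiableAt.differentiableWithinAt
      · exact (hR x ⟨h, hx.2⟩).differentiableAt.differentiableWithinAt
    · rw [contDiffOn_zero]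
      exact fun x hx => (hcont x hx).continuousWithinAt
  rw [zero_add] at this
  exact ⟨this.contDiffAt (Ioo_mem_nhds hac hcb), hdc, hcont c ⟨hac, hcb⟩⟩

lemma local_K {F : ℝ → ℝ} (hFp : F π = π) (h1 : ContDiffOn ℝ (⊤ : ℕ∞) F (Set.Icc (π - 1) π))
    (h2 : ContDiffOn ℝ (⊤ : ℕ∞) F (Set.Icc π (π + 1))) (hd : HasDerivAt F (exp (-1)) π) :
    ∃ ε > 0, ∃ K : ℝ → ℝ, ContDiffOn ℝ (⊤ : ℕ∞) K (Set.Icc (π - ε) π) ∧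
      ContDiffOn ℝ (⊤ : ℕ∞) K (Set.Icc π (π + ε)) ∧ K π = π ∧
      HasDerivWithinAt K 1 (Set.Icc (π - ε) π) π ∧ HasDerivWithinAt K 1 (Set.Icc π (π + ε)) π ∧
      ∀ x ∈ Set.Icc (π - ε) (π + ε), K (F x) = ff 1 (K x) := by
  have hμ0 : 0 < exp (-1) := exp_pos _
  have hμ1 : exp (-1) < 1 / 2 := by
    rw [exp_neg, one_div]
    exact inv_strictAnti₀ (by norm_num) (by linarith [exp_one_gt_d9])
  obtain ⟨δ1, hδ1, H1⟩ := koenigs (a := π - 1) (b := π) (c := π) (by linarith) ⟨by linarith, le_rfl⟩ hFp h1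
    hd.hasDerivWithinAt hμ0 hμ1
  obtain ⟨δ2, hδ2, H2⟩ := koenigs (a := π) (b := π + 1) (c := π) (by linarith) ⟨le_rfl, by linarith⟩ hFp h2
    hd.hasDerivWithinAt hμ0 hμ1
  let ε := min 1 (min δ1 δ2)
  have hε : 0 < ε := by positivity
  have e1 : ε ≤ 1 := min_le_left _ _
  have e2 : ε ≤ δ1 := (min_le_right _ _).trans (min_le_left _ _)
  have e3 : ε ≤ δ2 := (min_le_right _ _).trans (min_le_right _ _)
  obtain ⟨κ1, s1, z1, d1, E1⟩ := H1 (π - ε) π (by linarith) (by linarith) le_rfl le_rfl (by linarith)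
    (by linarith) (by linarith)
  obtain ⟨κ2, s2, z2, d2, E2⟩ := H2 π (π + ε) (by linarith) (by linarith) (by linarith) (by linarith) (by linarith)
    (by linarith) (by linarith)
  let κ : ℝ → ℝ := fun x => if x ≤ π then κ1 x else κ2 x
  have k1 : ∀ x ∈ Set.Icc (π - ε) π, κ x = κ1 x := fun x hx => if_pos hx.2
  have k2 : ∀ x ∈ Set.Icc π (π + ε), κ x = κ2 x := by
    intro x hx
    rcases eq_or_lt_of_le hx.1 with h | h
    · simp [κ, ← h, z1, z2]
    · exact if_neg (not_le.2 h)
  have p1 : π ∈ Set.Icc (π - ε) π := ⟨by linarith, le_rfl⟩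
  have p2 : π ∈ Set.Icc π (π + ε) := ⟨le_rfl, by linarith⟩
  have S1 := s1.congr k1
  have S2 := s2.congr k2
  have D1 := d1.congr k1 (k1 π p1)
  have D2 := d2.congr k2 (k2 π p2)
  have z : κ π = 0 := by rw [k1 π p1, z1]
  have der : ∀ s : Set ℝ, HasDerivWithinAt κ 1 s π → HasDerivWithinAt (fun x => π + 2 * arctan (κ x / 2)) 1 s π := by
    intro s h
    refine (((h.div_const 2).arctan.const_mul 2).const_add π).congr_deriv ?_
    rw [z]; norm_num
  refine ⟨ε, hε, fun x => π + 2 * arctan (κ x / 2), ?_, ?_, by simp [z], der _ D1, der _ D2, ?_⟩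
  · exact contDiffOn_const.add (contDiffOn_const.mul ((S1.div_const 2).arctan))
  · exact contDiffOn_const.add (contDiffOn_const.mul ((S2.div_const 2).arctan))
  · intro x hx
    have : κ (F x) = exp (-1) * κ x := by
      rcases le_total x π with h | h
      · have hx' : x ∈ Set.Icc (π - ε) π := ⟨hx.1, h⟩
        rw [k1 _ (E1 x hx').1, k1 x hx', (E1 x hx').2]
      · have hx' : x ∈ Set.Icc π (π + ε) := ⟨h, hx.2⟩
        rw [k2 _ (E2 x hx').1, k2 x hx', (E2 x hx').2]
    simp only [ff_arctan, this]
    congr 3; ring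

lemma blend_K {ε : ℝ} (hε : 0 < ε) {K : ℝ → ℝ} (h1 : ContDiffOn ℝ (⊤ : ℕ∞) K (Set.Icc (π - ε) π))
    (h2 : ContDiffOn ℝ (⊤ : ℕ∞) K (Set.Icc π (π + ε))) (hK : K π = π)
    (d1 : HasDerivWithinAt K 1 (Set.Icc (π - ε) π) π) (d2 : HasDerivWithinAt K 1 (Set.Icc π (π + ε)) π) :
    ∃ δ > 0, δ ≤ ε ∧ ∃ K0 : ℝ → ℝ, (∀ x, ContDiffAt ℝ 1 K0 x ∧ 0 < deriv K0 x) ∧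
      (∀ x, x ≠ π → ContDiffAt ℝ (⊤ : ℕ∞) K0 x) ∧ (∀ x, |x - π| ≤ δ → K0 x = K x) ∧
      (∀ x, 1 ≤ |x - π| → K0 x = x) := by
  obtain ⟨g1, g2, g3⟩ := glue_C1 (a := π - ε) (b := π + ε) (by linarith) (by linarith) h1 h2 d1 d2
  have hsm : ∀ x, |x - π| < ε → x ≠ π → ContDiffAt ℝ (⊤ : ℕ∞) K x := by
    intro x hx hne
    rw [abs_lt] at hx
    rcases lt_or_gt_of_ne hne with h | h
    · exact h1.contDiffAt (Icc_mem_nhds (by linarith) h)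
    · exact h2.contDiffAt (Icc_mem_nhds h (by linarith))
  have hC1 : ∀ x, |x - π| < ε → ContDiffAt ℝ 1 K x := by
    intro x hx
    by_cases h : x = π
    · rw [h]; exact g1
    · exact (hsm x hx h).of_le (by exact_mod_cast le_top)
  let χ : ContDiffBump (0 : ℝ) := ⟨1, 2, by norm_num, by norm_num⟩
  have hχ : ContDiff ℝ (⊤ : ℕ∞) χ := χ.contDiff
  obtain ⟨C, hC⟩ := (isCompact_Icc (a := (-3 : ℝ)) (b := 3)).exists_bound_of_continuousOn
    ((hχ.continuous_deriv (by simp)).continuousOn)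
  have hC0 : 0 ≤ C := (norm_nonneg _).trans (hC 0 (by norm_num))
  let η := 1 / (2 * (3 * C + 1))
  have hη : 0 < η := by positivity
  have hηC : η * (3 * C + 1) = 1 / 2 := by simp only [η]; field_simp
  have hdK : deriv K π = 1 := g2.deriv
  obtain ⟨ρ, hρ, hρK⟩ := Metric.continuousAt_iff.1 g3 η hη
  let δ := min (min ρ ε) 1 / 4
  have hδ : 0 < δ := by positivity
  have m1 : 4 * δ ≤ ρ := by
    have : min (min ρ ε) 1 ≤ ρ := (min_le_left _ _).trans (min_le_left _ _)
    simp only [δ]; linarith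
  have m2 : 4 * δ ≤ ε := by
    have : min (min ρ ε) 1 ≤ ε := (min_le_left _ _).trans (min_le_right _ _)
    simp only [δ]; linarith
  have m3 : 4 * δ ≤ 1 := by
    have : min (min ρ ε) 1 ≤ 1 := min_le_right _ _
    simp only [δ]; linarith
  let X : ℝ → ℝ := fun x => χ ((x - π) / δ)
  have hX : ContDiff ℝ (⊤ : ℕ∞) X := hχ.comp ((contDiff_id.sub contDiff_const).div_const δ)
  let K0 : ℝ → ℝ := fun x => x + X x * (K x - x)
  have hX0 : ∀ x, 2 * δ ≤ |x - π| → X x = 0 := by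
    intro x hx
    apply χ.zero_of_le_dist
    rw [Real.dist_eq, sub_zero, abs_div, abs_of_pos hδ, le_div_iff₀ hδ]
    exact hx
  have hK0 : ∀ x, 2 * δ ≤ |x - π| → K0 x = x := by
    intro x hx
    simp [K0, hX0 x hx]
  have hout : ∀ x, 2 * δ < |x - π| → K0 =ᶠ[nhds x] id := by
    intro x hx
    have : ∀ᶠ y in nhds x, 2 * δ < |y - π| :=
      (continuous_abs.comp (continuous_id.sub continuous_const)).continuousAt.eventually (lt_mem_nhds hx)
    filter_upwards [this] with y hy using hK0 y hy.le
  have hin : ∀ x, |x - π| < 3 * δ → 0 < deriv K0 x := by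
    intro x hx
    have hxC := (hC1 x (by linarith)).differentiableAt (by simp)
    have dX : HasDerivAt X (deriv χ ((x - π) / δ) * (1 / δ)) x := by
      have e1 : HasDerivAt (fun x : ℝ => (x - π) / δ) (1 / δ) x := ((hasDerivAt_id x).sub_const π).div_const δ
      exact (((hχ.differentiable (by simp)) _).hasDerivAt).comp x e1
    have d0 : HasDerivAt K0 (1 + (deriv χ ((x - π) / δ) * (1 / δ) * (K x - x) + X x * (deriv K x - 1))) x :=
      (hasDerivAt_id x).add (dX.mul (hxC.hasDerivAt.sub (hasDerivAt_id x)))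
    rw [d0.deriv]
    have b1 : |deriv χ ((x - π) / δ)| ≤ C := by
      apply hC
      rw [Set.mem_Icc, ← abs_le, abs_div, abs_of_pos hδ, div_le_iff₀ hδ]
      exact hx.le
    have b2 : |deriv K x - 1| ≤ η := by
      have := hρK (x := x) (by rw [Real.dist_eq]; linarith)
      rw [Real.dist_eq, hdK] at this
      exact this.le
    have b3 : |K x - x| ≤ η * (3 * δ) := by
      have hder : ∀ y ∈ Metric.ball π (3 * δ), HasDerivWithinAt (fun y => K y - y) (deriv K y - 1)
          (Metric.ball π (3 * δ)) y := by
        intro y hy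
        rw [Metric.mem_ball, Real.dist_eq] at hy
        have := (hC1 y (by linarith)).differentiableAt (by simp)
        exact (this.hasDerivAt.sub (hasDerivAt_id y)).hasDerivWithinAt
      have := Convex.norm_image_sub_le_of_norm_hasDerivWithin_le (C := η) hder (fun y hy => by
        rw [Metric.mem_ball, Real.dist_eq] at hy
        have := hρK (x := y) (by rw [Real.dist_eq]; linarith)
        rw [Real.dist_eq, hdK] at this
        exact this.le) (convex_ball π (3 * δ)) (Metric.mem_ball_self (by positivity))
        (show x ∈ _ by rw [Metric.mem_ball, Real.dist_eq]; exact hx)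
      rw [hK, sub_self, sub_zero, Real.norm_eq_abs, Real.norm_eq_abs] at this
      exact this.trans (by gcongr)
    have b4 : |X x| ≤ 1 := by
      rw [abs_of_nonneg χ.nonneg]; exact χ.le_one
    have t1 : |deriv χ ((x - π) / δ) * (1 / δ) * (K x - x)| ≤ C * (1 / δ) * (η * (3 * δ)) := by
      rw [abs_mul, abs_mul, abs_of_pos (show 0 < 1 / δ by positivity)]
      gcongr
    have t2 : |X x * (deriv K x - 1)| ≤ 1 * η := by
      rw [abs_mul]
      gcongr
    have t3 : C * (1 / δ) * (η * (3 * δ)) = η * (3 * C) := by field_simp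
    rw [t3] at t1
    have := (abs_le.1 t1).1
    have := (abs_le.1 t2).1
    linarith
  refine ⟨δ, hδ, by linarith, K0, ?_, ?_, ?_, ?_⟩
  · intro x
    by_cases hx : |x - π| < 3 * δ
    · refine ⟨?_, hin x hx⟩
      exact contDiffAt_id.add (((hX.of_le (by exact_mod_cast le_top)).contDiffAt).mul
        ((hC1 x (by linarith)).sub contDiffAt_id))
    · have := hout x (by linarith)
      exact ⟨contDiffAt_id.congr_of_eventuallyEq this, by rw [this.deriv_eq]; simp⟩
  · intro x hne
    by_cases hx : |x - π| < 3 * δ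
    · exact contDiffAt_id.add (hX.contDiffAt.mul
        ((hsm x (by linarith) hne).sub contDiffAt_id))
    · exact contDiffAt_id.congr_of_eventuallyEq (hout x (by linarith))
  · intro x hx
    have : X x = 1 := by
      apply χ.one_of_mem_closedBall
      rw [Metric.mem_closedBall, Real.dist_eq, sub_zero, abs_div, abs_of_pos hδ, div_le_iff₀ hδ]
      simpa [χ] using hx
    simp [K0, this]
  · intro x hx
    exact hK0 x (by linarith)

lemma periodize {K0 : ℝ → ℝ} (h : ∀ x, 1 ≤ |x - π| → K0 x = x) :
    ∃ K : ℝ → ℝ, (∀ θ, K (θ + 2 * π) = K θ + 2 * π) ∧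
      ∀ (m : ℤ) (θ : ℝ), |θ - 2 * π * m - π| < π + 1 → K θ = K0 (θ - 2 * π * m) + 2 * π * m := by
  have hpi := pi_gt_three
  let H : ℝ → ℝ := fun x => K0 x - x
  have hH : ∀ x, 1 ≤ |x - π| → H x = 0 := fun x hx => by simp [H, h x hx]
  refine ⟨fun θ => θ + H (2 * π * Int.fract (θ / (2 * π))), fun θ => ?_, fun m θ hθ => ?_⟩
  · have : (θ + 2 * π) / (2 * π) = θ / (2 * π) + 1 := by field_simp
    simp only [this, Int.fract_add_one]
    ring
  · have e1 : 2 * π * Int.fract (θ / (2 * π)) = θ - 2 * π * ⌊θ / (2 * π)⌋ := by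
      rw [Int.fract]; field_simp
    have f0 := Int.fract_nonneg (θ / (2 * π))
    have f1 := Int.fract_lt_one (θ / (2 * π))
    have y0 : 0 ≤ θ - 2 * π * ⌊θ / (2 * π)⌋ := by rw [← e1]; positivity
    have y1 : θ - 2 * π * ⌊θ / (2 * π)⌋ < 2 * π := by rw [← e1]; nlinarith
    simp only [e1]
    generalize ⌊θ / (2 * π)⌋ = n at *
    have key : H (θ - 2 * π * n) = H (θ - 2 * π * m) := by
      rw [abs_lt] at hθ
      rcases lt_trichotomy n m with hnm | rfl | hnm
      · have : (n : ℝ) + 1 ≤ m := by exact_mod_cast hnm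
        have hm : 2 * π * (n + 1) ≤ 2 * π * m := by gcongr
        rw [hH _ (by rw [le_abs]; left; linarith), hH _ (by rw [le_abs]; right; linarith)]
      · rfl
      · have : (m : ℝ) + 1 ≤ n := by exact_mod_cast hnm
        have hm : 2 * π * (m + 1) ≤ 2 * π * n := by gcongr
        rw [hH _ (by rw [le_abs]; right; linarith), hH _ (by rw [le_abs]; left; linarith)]
    rw [key]
    simp only [H]; ring

lemma global_K {F : ℝ → ℝ} (hFp : F π = π) (h1 : ContDiffOn ℝ (⊤ : ℕ∞) F (Set.Icc (π - 1) π))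
    (h2 : ContDiffOn ℝ (⊤ : ℕ∞) F (Set.Icc π (π + 1))) (hd : HasDerivAt F (exp (-1)) π) :
    ∃ δ > 0, ∃ K : ℝ → ℝ, (∀ θ, K (θ + 2 * π) = K θ + 2 * π) ∧ ContDiff ℝ 1 K ∧ (∀ θ, 0 < deriv K θ) ∧
      (∀ θ, (∀ m : ℤ, θ ≠ π + 2 * π * m) → ContDiffAt ℝ (⊤ : ℕ∞) K θ) ∧
      ContDiffOn ℝ (⊤ : ℕ∞) K (Set.Icc (π - δ) π) ∧
      ContDiffOn ℝ (⊤ : ℕ∞) K (Set.Icc π (π + δ)) ∧ K π = π ∧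
      (∀ x, |x - π| ≤ δ → |F x - π| ≤ δ → K (F x) = ff 1 (K x)) := by
  obtain ⟨ε, hε, Kt, s1, s2, hKt, d1, d2, hE⟩ := local_K hFp h1 h2 hd
  obtain ⟨δ, hδ, hδε, K0, c1, c2, c3, c4⟩ := blend_K hε s1 s2 hKt d1 d2
  obtain ⟨K, hper, hK⟩ := periodize c4
  have hpi := pi_gt_three
  have hloc : ∀ θ : ℝ, ∃ m : ℤ, K =ᶠ[nhds θ] fun y => K0 (y - 2 * π * m) + 2 * π * m := by
    intro θ
    refine ⟨⌊θ / (2 * π)⌋, ?_⟩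
    have e1 : 2 * π * Int.fract (θ / (2 * π)) = θ - 2 * π * ⌊θ / (2 * π)⌋ := by
      rw [Int.fract]; field_simp
    have f0 := Int.fract_nonneg (θ / (2 * π))
    have f1 := Int.fract_lt_one (θ / (2 * π))
    have y0 : 0 ≤ θ - 2 * π * ⌊θ / (2 * π)⌋ := by rw [← e1]; positivity
    have y1 : θ - 2 * π * ⌊θ / (2 * π)⌋ < 2 * π := by rw [← e1]; nlinarith
    filter_upwards [Ioo_mem_nhds (show θ - 1 < θ by linarith) (show θ < θ + 1 by linarith)] with y hy
    apply hK
    rw [abs_lt]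
    constructor <;> linarith [hy.1, hy.2]
  have hsub : ∀ (m : ℤ) (n : WithTop ℕ∞) (θ : ℝ), ContDiffAt ℝ n K0 (θ - 2 * π * m) →
      ContDiffAt ℝ n (fun y => K0 (y - 2 * π * m) + 2 * π * m) θ := by
    intro m n θ h
    exact (ContDiffAt.comp θ (f := fun y => y - 2 * π * m) h (contDiffAt_id.sub contDiffAt_const)).add contDiffAt_const
  have hKK : ∀ x, |x - π| ≤ δ → |x - π| < π + 1 → K x = Kt x := by
    intro x hx hx'
    have := hK 0 x (by simpa using hx')
    rw [this]
    simpa using c3 x hx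
  let δ' := min δ 1
  have hδ' : 0 < δ' := by positivity
  have l1 : δ' ≤ δ := min_le_left _ _
  have l2 : δ' ≤ 1 := min_le_right _ _
  have hKt' : ∀ x, |x - π| ≤ δ' → K x = Kt x := fun x hx => hKK x (by linarith) (by linarith)
  refine ⟨δ', hδ', K, hper, ?_, ?_, ?_, ?_, ?_, ?_, ?_⟩
  · rw [contDiff_iff_contDiffAt]
    intro θ
    obtain ⟨m, hm⟩ := hloc θ
    exact (hsub m 1 θ (c1 _).1).congr_of_eventuallyEq hm
  · intro θ
    obtain ⟨m, hm⟩ := hloc θ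
    rw [hm.deriv_eq, deriv_add_const, deriv_comp_sub_const]
    exact (c1 _).2
  · intro θ hθ
    obtain ⟨m, hm⟩ := hloc θ
    refine (hsub m _ θ (c2 _ ?_)).congr_of_eventuallyEq hm
    intro h
    exact hθ m (by linarith)
  · refine (s1.mono (Set.Icc_subset_Icc_left (by linarith))).congr fun x hx => hKt' x ?_
    rw [abs_le]; constructor <;> linarith [hx.1, hx.2]
  · refine (s2.mono (Set.Icc_subset_Icc_right (by linarith))).congr fun x hx => hKt' x ?_
    rw [abs_le]; constructor <;> linarith [hx.1, hx.2]
  · rw [hKt' π (by simpa using hδ'.le), hKt]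
  · intro x hx hFx
    rw [hKt' x hx, hKt' _ hFx]
    apply hE
    rw [abs_le] at hx
    constructor <;> linarith [hx.1, hx.2]

lemma equiv_int {f : ℝ → ℝ} (h : ∀ θ, f (θ + 2 * π) = f θ + 2 * π) (m : ℤ) (θ : ℝ) :
    f (θ + 2 * π * m) = f θ + 2 * π * m := by
  have hp : Function.Periodic (fun x => f x - x) (2 * π) := fun x => by simp only [h]; ring
  have := hp.int_mul m θ
  rw [mul_comm (m : ℝ)] at this
  linarith

lemma contDiffAt_shift {f : ℝ → ℝ} {n : WithTop ℕ∞} {c θ : ℝ} (h : ContDiffAt ℝ n f (θ - c)) :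
    ContDiffAt ℝ n (fun x => f (x - c)) θ :=
  ContDiffAt.comp θ (f := fun y => y - c) h (contDiffAt_id.sub contDiffAt_const)

lemma isOpen_U : IsOpen {θ : ℝ | ∀ m : ℤ, θ ≠ π + 2 * π * m} := by
  have : {θ : ℝ | ∀ m : ℤ, θ ≠ π + 2 * π * m} = (fun θ : ℝ => cos (θ / 2)) ⁻¹' {0}ᶜ := by
    ext θ
    simp only [Set.mem_ofPred_eq, Set.mem_preimage, Set.mem_compl_iff, Set.mem_singleton_iff, cos_eq_zero_iff,
      not_exists]
    refine forall_congr' fun m => not_congr ⟨fun h => by rw [h]; ring, fun h => by linarith⟩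
  rw [this]
  exact isOpen_compl_singleton.preimage (by fun_prop)

lemma U_of_bij {f : ℝ → ℝ} (hf : Function.Injective f) (h : ∀ θ, f (θ + 2 * π) = f θ + 2 * π) (hp : f π = π)
    {θ : ℝ} (hθ : ∀ m : ℤ, θ ≠ π + 2 * π * m) (m : ℤ) : f θ ≠ π + 2 * π * m := by
  intro e
  apply hθ m
  apply hf
  rw [e, equiv_int h, hp]

lemma U_left {θ : ℝ} (hθ : θ ∈ Set.Ioo (-π) π) (m : ℤ) : θ ≠ π + 2 * π * m := by
  rintro rfl
  have hpi := pi_pos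
  have h1 : (m : ℝ) < 0 := by by_contra h; push Not at h; nlinarith [hθ.2]
  have h2 : (-1 : ℝ) < m := by by_contra h; push Not at h; nlinarith [hθ.1]
  have h3 : m < 0 := by exact_mod_cast h1
  have h4 : -1 < m := by exact_mod_cast h2
  omega

lemma U_right {θ : ℝ} (hθ : θ ∈ Set.Ioo π (3 * π)) (m : ℤ) : θ ≠ π + 2 * π * m := by
  rintro rfl
  have hpi := pi_pos
  have h1 : (m : ℝ) < 1 := by by_contra h; push Not at h; nlinarith [hθ.2]
  have h2 : (0 : ℝ) < m := by by_contra h; push Not at h; nlinarith [hθ.1]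
  have h3 : m < 1 := by exact_mod_cast h1
  have h4 : 0 < m := by exact_mod_cast h2
  omega

lemma g_side {a b : ℝ} (hab : a < b) (hpi : π ∈ Set.Icc a b) {K : ℝ → ℝ} (hK1 : ContDiff ℝ 1 K)
    (hKd : ∀ θ, 0 < deriv K θ) (hK : ContDiffOn ℝ (⊤ : ℕ∞) K (Set.Icc a b)) (hKp : K π = π) :
    ContDiffOn ℝ (⊤ : ℕ∞) (fun θ => sin (K θ) / deriv K θ) (Set.Icc a b) ∧
    HasDerivWithinAt (fun θ => sin (K θ) / deriv K θ) (-1) (Set.Icc a b) π := by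
  have hU : UniqueDiffOn ℝ (Set.Icc a b) := uniqueDiffOn_Icc hab
  have hdK : ∀ x, HasDerivAt K (deriv K x) x := fun x => (hK1.differentiable (by simp) x).hasDerivAt
  have h1 : ContDiffOn ℝ (⊤ : ℕ∞) (deriv K) (Set.Icc a b) :=
    (top_derivWithin hU hK).congr fun x hx => ((hdK x).hasDerivWithinAt.derivWithin (hU x hx)).symm
  have h2 : ContDiffOn ℝ (⊤ : ℕ∞) (fun θ => sin (K θ)) (Set.Icc a b) := hK.sin
  refine ⟨h2.div h1 fun x _ => (hKd x).ne', ?_⟩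
  have e1 := ((h1.differentiableOn (by simp)) π hpi).hasDerivWithinAt
  have e2 := (hdK π).sin.hasDerivWithinAt (s := Set.Icc a b)
  refine (e2.div e1 (hKd π).ne').congr_deriv ?_
  have := (hKd π).ne'
  simp only [hKp, sin_pi, cos_pi]
  field_simp
  ring


lemma stmt_aux (γ : ℝ → ℝ)
    (hmono : StrictMono γ) (hbij : Function.Bijective γ)
    (hC1 : ContDiff ℝ 1 γ)
    (hper : ∀ θ : ℝ, γ (θ + 2 * π) = γ θ + 2 * π)
    (hfix : γ π = π) (hd : deriv γ π = 1)
    (hsm : ContDiffOn ℝ (⊤ : ℕ∞) γ {θ : ℝ | ∀ m : ℤ, θ ≠ π + 2 * π * m})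
    (hos : OneSidedSmoothAtPi γ) :
    ∃ (g : ℝ → ℝ) (φ : ℝ → ℝ → ℝ) (γ' : ℝ → ℝ),
      (∀ θ : ℝ, g (θ + 2 * π) = g θ) ∧
      ContDiff ℝ 1 g ∧
      ContDiffOn ℝ (⊤ : ℕ∞) g {θ : ℝ | ∀ m : ℤ, θ ≠ π + 2 * π * m} ∧
      OneSidedSmoothAtPi g ∧
      (∀ t θ : ℝ, HasDerivAt (fun s => φ s θ) (g (φ t θ)) t) ∧
      (∀ θ : ℝ, φ 0 θ = θ) ∧
      ContDiff ℝ (⊤ : ℕ∞) γ' ∧ StrictMono γ' ∧ Function.Bijective γ' ∧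
      (∀ θ : ℝ, γ' (θ + 2 * π) = γ' θ + 2 * π) ∧
      (∀ θ : ℝ, γ θ = φ 1 (γ' θ)) := by
  have hpi := pi_gt_three
  have hpi0 := pi_pos
  obtain ⟨dp, dm, hlim⟩ := hos
  -- one-sided smoothness of γ
  have cl1 : π ∈ closure (Set.Ioo (-π) π) := by
    rw [closure_Ioo (by linarith)]; exact ⟨by linarith, le_rfl⟩
  have cl2 : π ∈ closure (Set.Ioo π (3 * π)) := by
    rw [closure_Ioo (by linarith)]; exact ⟨le_rfl, by linarith⟩
  have γ1 : ContDiffOn ℝ (⊤ : ℕ∞) γ (insert π (Set.Ioo (-π) π)) :=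
    extend_smooth (d := dm) isOpen_Ioo (convex_Ioo _ _) cl1 (by simp) (hsm.mono fun x hx => U_left hx)
      hC1.continuous.continuousAt
      (Or.inr ⟨Ioo_mem_nhdsLT (by linarith), fun x hx => hx.2⟩)
      (fun k => (hlim k).2.mono_left (nhdsWithin_mono _ fun x hx => hx.2))
  have γ2 : ContDiffOn ℝ (⊤ : ℕ∞) γ (insert π (Set.Ioo π (3 * π))) :=
    extend_smooth (d := dp) isOpen_Ioo (convex_Ioo _ _) cl2 (by simp) (hsm.mono fun x hx => U_right hx)
      hC1.continuous.continuousAt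
      (Or.inl ⟨Ioo_mem_nhdsGT (by linarith), fun x hx => hx.1⟩)
      (fun k => (hlim k).1.mono_left (nhdsWithin_mono _ fun x hx => hx.1))
  have ff3 : ff 1 (3 * π) = 3 * π := by
    have := ff_per 1 π
    rw [ff_pi] at this
    rw [show 3 * π = π + 2 * π by ring, this]
  have ffm : ff 1 (-π) = -π := by
    have := ff_per 1 (-π)
    rw [show -π + 2 * π = π by ring, ff_pi] at this
    linarith
  have hdF : HasDerivAt (fun x => γ (ff 1 x)) (exp (-1)) π := by
    have e1 : HasDerivAt γ 1 (ff 1 π) := by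
      rw [ff_pi, ← hd]; exact (hC1.differentiable (by simp) π).hasDerivAt
    have := e1.comp π (ff_deriv_pi 1)
    rwa [one_mul] at this
  obtain ⟨δ, hδ, K, Kper, KC1, Kd, Ksm, K1, K2, Kpi, KE⟩ := global_K (F := fun x => γ (ff 1 x))
    (by simp [ff_pi, hfix])
    (γ1.comp (ff_smooth 1).contDiffOn (fun x hx => by
      rcases eq_or_lt_of_le hx.2 with h | h
      · rw [h, ff_pi]; exact Set.mem_insert _ _
      · refine Set.mem_insert_of_mem _ ⟨?_, ?_⟩
        · rw [← ffm]; exact ff_mono 1 (by linarith [hx.1])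
        · conv_rhs => rw [← ff_pi 1]
          exact ff_mono 1 h))
    (γ2.comp (ff_smooth 1).contDiffOn (fun x hx => by
      rcases eq_or_lt_of_le hx.1 with h | h
      · rw [← h, ff_pi]; exact Set.mem_insert _ _
      · refine Set.mem_insert_of_mem _ ⟨?_, ?_⟩
        · conv_lhs => rw [← ff_pi 1]
          exact ff_mono 1 h
        · rw [← ff3]; exact ff_mono 1 (by linarith [hx.2])))
    hdF
  have hKdiff : ∀ x, HasDerivAt K (deriv K x) x := fun x => (KC1.differentiable (by simp) x).hasDerivAt
  have Kmono : StrictMono K := strictMono_of_deriv_pos Kd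
  have Ksurj : Function.Surjective K := by
    intro y
    obtain ⟨n, hn⟩ := exists_nat_ge |y|
    have e1 := equiv_int Kper n π
    have e2 := equiv_int Kper (-(n : ℤ) - 1) π
    rw [Kpi] at e1 e2
    push_cast at e1 e2
    have hy := abs_le.1 hn
    have hn0 : (0 : ℝ) ≤ n := Nat.cast_nonneg n
    obtain ⟨x, _, hx⟩ := intermediate_value_Icc (a := π + 2 * π * (-(n : ℝ) - 1)) (b := π + 2 * π * n)
      (by nlinarith) KC1.continuous.continuousOn (show y ∈ _ by
        rw [e1, e2]; constructor <;> nlinarith)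
    exact ⟨x, hx⟩
  let Kh : ℝ ≃ₜ ℝ := (Kmono.orderIsoOfSurjective K Ksurj).toHomeomorph
  have hKh : ∀ x, Kh x = K x := fun x => rfl
  let L : ℝ → ℝ := Kh.symm
  have hLc : Continuous L := Kh.symm.continuous
  have hKL : ∀ y, K (L y) = y := fun y => Kh.apply_symm_apply y
  have hLK : ∀ x, L (K x) = x := fun x => Kh.symm_apply_apply x
  have Lmono : StrictMono L := fun x y h => by
    rw [← Kmono.lt_iff_lt, hKL, hKL]; exact h
  have Lper : ∀ y, L (y + 2 * π) = L y + 2 * π := fun y => by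
    apply Kmono.injective
    rw [hKL, Kper, hKL]
  have Lpi : L π = π := by
    conv_lhs => rw [← Kpi]
    exact hLK π
  have Lder : ∀ y, HasDerivAt L (deriv K (L y))⁻¹ y := fun y =>
    HasDerivAt.of_local_left_inverse hLc.continuousAt (hKdiff _) (Kd _).ne' (Filter.Eventually.of_forall hKL)
  have Lsm : ∀ y, (∀ m : ℤ, y ≠ π + 2 * π * m) → ContDiffAt ℝ (⊤ : ℕ∞) L y := by
    intro y hy
    exact Kh.toOpenPartialHomeomorph.contDiffAt_symm_deriv (Kd (L y)).ne' trivial (hKdiff (L y))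
      (Ksm (L y) (U_of_bij Lmono.injective Lper Lpi hy))
  let g : ℝ → ℝ := fun θ => sin (K θ) / deriv K θ
  have gper : ∀ θ, g (θ + 2 * π) = g θ := by
    intro θ
    have e1 : deriv K (θ + 2 * π) = deriv K θ := by
      rw [← deriv_comp_add_const]
      simp only [Kper, deriv_add_const]
    simp only [g, e1, Kper, sin_add_two_pi]
  have gsm : ContDiffOn ℝ (⊤ : ℕ∞) g {θ : ℝ | ∀ m : ℤ, θ ≠ π + 2 * π * m} := by
    have hKU : ContDiffOn ℝ (⊤ : ℕ∞) K {θ : ℝ | ∀ m : ℤ, θ ≠ π + 2 * π * m} :=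
      fun θ hθ => (Ksm θ hθ).contDiffWithinAt
    exact (hKU.sin).div (hKU.deriv_of_isOpen isOpen_U (by simp)) fun x _ => (Kd x).ne'
  obtain ⟨g1, g1d⟩ := g_side (a := π - δ) (b := π) (by linarith) ⟨by linarith, le_rfl⟩ KC1 Kd K1 Kpi
  obtain ⟨g2, g2d⟩ := g_side (a := π) (b := π + δ) (by linarith) ⟨le_rfl, by linarith⟩ KC1 Kd K2 Kpi
  have gpi : ContDiffAt ℝ 1 g π := (glue_C1 (by linarith) (by linarith) g1 g2 g1d g2d).1
  let γ' : ℝ → ℝ := fun θ => L (ff (-1) (K (γ θ)))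
  have γ'per : ∀ θ, γ' (θ + 2 * π) = γ' θ + 2 * π := fun θ => by
    simp only [γ', hper, Kper, ff_per, Lper]
  have γ'pi : ContDiffAt ℝ (⊤ : ℕ∞) γ' π := by
    refine (ff_smooth (-1)).contDiffAt.congr_of_eventuallyEq ?_
    have c1 : Continuous fun θ => |ff (-1) θ - π| := ((ff_smooth (-1)).continuous.sub continuous_const).abs
    have c2 : Continuous fun θ => |γ θ - π| := (hC1.continuous.sub continuous_const).abs
    have E1 : ∀ᶠ θ in nhds π, |ff (-1) θ - π| < δ :=
      c1.continuousAt.eventually_lt continuousAt_const (by simpa [ff_pi] using hδ)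
    have E2 : ∀ᶠ θ in nhds π, |γ θ - π| < δ :=
      c2.continuousAt.eventually_lt continuousAt_const (by simpa [hfix] using hδ)
    filter_upwards [E1, E2] with θ h1 h2
    have e0 : ff 1 (ff (-1) θ) = θ := by rw [ff_add]; simp [ff_zero]
    have := KE (ff (-1) θ) h1.le (by simpa only [e0] using h2.le)
    simp only [e0] at this
    simp only [γ', this, ff_add]
    simp [ff_zero, hLK]
  refine ⟨g, fun t θ => L (ff t (K θ)), γ', gper, ?_, gsm, ?_, ?_, ?_, ?_, ?_, ?_, γ'per, ?_⟩
  · rw [contDiff_iff_contDiffAt]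
    intro θ
    by_cases hθ : ∀ m : ℤ, θ ≠ π + 2 * π * m
    · exact (gsm.contDiffAt (isOpen_U.mem_nhds hθ)).of_le (by exact_mod_cast le_top)
    · push Not at hθ
      obtain ⟨m, rfl⟩ := hθ
      have e : g = fun x => g (x - 2 * π * m) := by
        funext x
        have hp : Function.Periodic g (2 * π) := gper
        have := hp.sub_int_mul_eq (x := x) m
        rw [mul_comm (2 * π), this]
      rw [e]
      apply contDiffAt_shift
      simpa using gpi
  · have c1 : π ∈ closure (Set.Ioo (π - δ) π) := by
      rw [closure_Ioo (by linarith)]; exact ⟨by linarith, le_rfl⟩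
    have c2 : π ∈ closure (Set.Ioo π (π + δ)) := by
      rw [closure_Ioo (by linarith)]; exact ⟨le_rfl, by linarith⟩
    have L1 := limits_of_smooth (f := g) isOpen_Ioo (convex_Ioo _ _) c1 (g1.mono (Set.insert_subset
      ⟨by linarith, le_rfl⟩ Set.Ioo_subset_Icc_self))
    have L2 := limits_of_smooth (f := g) isOpen_Ioo (convex_Ioo _ _) c2 (g2.mono (Set.insert_subset
      ⟨le_rfl, by linarith⟩ Set.Ioo_subset_Icc_self))
    choose em hem using L1
    choose ep hep using L2
    refine ⟨ep, em, fun k => ⟨(hep k).mono_left ?_, (hem k).mono_left ?_⟩⟩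
    · exact nhdsWithin_le_iff.2 (Ioo_mem_nhdsGT (by linarith))
    · exact nhdsWithin_le_iff.2 (Ioo_mem_nhdsLT (by linarith))
  · intro t θ
    refine ((Lder (ff t (K θ))).comp t (ff_hasDerivAt t (K θ))).congr_deriv ?_
    simp only [g, hKL]
    rw [div_eq_inv_mul]
  · intro θ
    simp only [ff_zero, hLK]
  · rw [contDiff_iff_contDiffAt]
    intro θ
    by_cases hθ : ∀ m : ℤ, θ ≠ π + 2 * π * m
    · have u1 := U_of_bij hmono.injective hper hfix hθ
      have u2 := U_of_bij Kmono.injective Kper Kpi u1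
      have u3 := U_of_bij (ff_bij (-1)).1 (ff_per (-1)) (ff_pi (-1)) u2
      have s1 : ContDiffAt ℝ (⊤ : ℕ∞) γ θ := hsm.contDiffAt (isOpen_U.mem_nhds hθ)
      have s2 : ContDiffAt ℝ (⊤ : ℕ∞) (fun θ => K (γ θ)) θ := (Ksm _ u1).comp θ s1
      have s3 : ContDiffAt ℝ (⊤ : ℕ∞) (fun θ => ff (-1) (K (γ θ))) θ := (ff_smooth (-1)).contDiffAt.comp θ s2
      exact ContDiffAt.comp (f := fun θ => ff (-1) (K (γ θ))) θ (Lsm _ u3) s3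
    · push Not at hθ
      obtain ⟨m, rfl⟩ := hθ
      have e : γ' = fun x => γ' (x - 2 * π * m) + 2 * π * m := by
        funext x
        rw [← equiv_int γ'per]
        simp
      rw [e]
      refine ContDiffAt.add (contDiffAt_shift ?_) contDiffAt_const
      simpa using γ'pi
  · exact Lmono.comp ((ff_mono (-1)).comp (Kmono.comp hmono))
  · have b1 : Function.Bijective L := Kh.symm.bijective
    exact b1.comp ((ff_bij (-1)).comp (Function.Bijective.comp ⟨Kmono.injective, Ksurj⟩ hbij))
  · intro θ
    simp only [γ', hKL, ff_add]
    simp [ff_zero, hLK]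

end Aux

/-- Lemma A.3: a lift `γ` of a piecewise smooth `C¹`-diffeomorphism of the circle whose
only nonsmooth point is `-1` (i.e. `θ = π`), fixing it with derivative `1`, factors as
`γ = Exp(g) ∘ γ̲` with `g` a piecewise smooth `C¹` vector field (nonsmooth only at
`π + 2πℤ`) and `γ̲` a lift of a smooth diffeomorphism. -/
theorem stmt_14 (γ : ℝ → ℝ)
    (hmono : StrictMono γ) (hbij : Function.Bijective γ)
    (hC1 : ContDiff ℝ 1 γ)
    (hper : ∀ θ : ℝ, γ (θ + 2 * π) = γ θ + 2 * π)
    (hfix : γ π = π) (hd : deriv γ π = 1)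
    (hsm : ContDiffOn ℝ (⊤ : ℕ∞) γ {θ : ℝ | ∀ m : ℤ, θ ≠ π + 2 * π * m})
    (hos : OneSidedSmoothAtPi γ) :
    ∃ (g : ℝ → ℝ) (φ : ℝ → ℝ → ℝ) (γ' : ℝ → ℝ),
      (∀ θ : ℝ, g (θ + 2 * π) = g θ) ∧
      ContDiff ℝ 1 g ∧
      ContDiffOn ℝ (⊤ : ℕ∞) g {θ : ℝ | ∀ m : ℤ, θ ≠ π + 2 * π * m} ∧
      OneSidedSmoothAtPi g ∧
      (∀ t θ : ℝ, HasDerivAt (fun s => φ s θ) (g (φ t θ)) t) ∧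
      (∀ θ : ℝ, φ 0 θ = θ) ∧
      ContDiff ℝ (⊤ : ℕ∞) γ' ∧ StrictMono γ' ∧ Function.Bijective γ' ∧
      (∀ θ : ℝ, γ' (θ + 2 * π) = γ' θ + 2 * π) ∧
      (∀ θ : ℝ, γ θ = φ 1 (γ' θ)) := by
  exact stmt_aux γ hmono hbij hC1 hper hfix hd hsm hos
end

section
/- For 2π-periodic smooth functions f, g : ℝ → ℝ define the bracket [f,g] = f'·g − f·g'. Let k ≥ 1 and let f₁, …, f_k be 2π-periodic smooth functions with f_i(π) = 0 and f_i'(π) = 0 for every i. Then the iterated bracket h = [f₁,[f₂,[…,[f_{k−1},f_k]…]]] satisfies h^{(j)}(π) = 0 for all 0 ≤ j ≤ k. -/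
open scoped Real

/-- The Lie bracket of vector fields on the circle: `[f,g] = f'·g - f·g'`. -/
noncomputable def vbracket (f g : ℝ → ℝ) : ℝ → ℝ :=
  fun θ => deriv f θ * g θ - f θ * deriv g θ

/-- The iterated bracket `[f₀,[f₁,[…,[f_{m-1},f_m]…]]]` of `m+1` functions. -/
noncomputable def iterBracket : (m : ℕ) → (Fin (m + 1) → ℝ → ℝ) → ℝ → ℝ
  | 0, f => f 0
  | m + 1, f => vbracket (f 0) (iterBracket m fun i => f i.succ)

theorem aux_mul (a b : ℝ → ℝ) (x : ℝ) (p q n : ℕ) (ha : ContDiff ℝ (⊤ : ℕ∞) a)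
    (hb : ContDiff ℝ (⊤ : ℕ∞) b) (h1 : ∀ j < p, iteratedDeriv j a x = 0)
    (h2 : ∀ j < q, iteratedDeriv j b x = 0) (hn : n < p + q) :
    iteratedDeriv n (a * b) x = 0 := by
  have ha' : ContDiffAt ℝ (n : ℕ∞) a x := (ha.of_le (by exact_mod_cast le_top)).contDiffAt
  have hb' : ContDiffAt ℝ (n : ℕ∞) b x := (hb.of_le (by exact_mod_cast le_top)).contDiffAt
  rw [iteratedDeriv_mul ha' hb']
  apply Finset.sum_eq_zero
  intro i hi
  rw [Finset.mem_range] at hi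
  by_cases hip : i < p
  · simp [h1 i hip]
  · simp [h2 (n - i) (by omega)]

theorem aux_deriv (a : ℝ → ℝ) (ha : ContDiff ℝ (⊤ : ℕ∞) a) :
    ContDiff ℝ (⊤ : ℕ∞) (deriv a) :=
  (contDiff_infty_iff_deriv.1 ha).2

theorem aux_main_s16 (m : ℕ) (f : Fin (m + 1) → ℝ → ℝ)
    (hsm : ∀ i, ContDiff ℝ (⊤ : ℕ∞) (f i))
    (hval : ∀ i, f i π = 0) (hder : ∀ i, deriv (f i) π = 0) :
    ContDiff ℝ (⊤ : ℕ∞) (iterBracket m f) ∧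
    ∀ j : ℕ, j < m + 2 → iteratedDeriv j (iterBracket m f) π = 0 := by
  induction m with
  | zero =>
    refine ⟨hsm 0, fun j hj => ?_⟩
    interval_cases j
    · simpa [iterBracket] using hval 0
    · simpa [iterBracket] using hder 0
  | succ m ih =>
    obtain ⟨hg, hz⟩ := ih (fun i => f i.succ) (fun i => hsm _) (fun i => hval _) (fun i => hder _)
    have e : iterBracket (m + 1) f = deriv (f 0) * iterBracket m (fun i => f i.succ)
        - f 0 * deriv (iterBracket m (fun i => f i.succ)) := rfl
    rw [e]
    generalize iterBracket m (fun i => f i.succ) = g at *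
    have hf := hsm 0
    have hf' := aux_deriv _ hf
    have hg' := aux_deriv _ hg
    have c1 : ContDiff ℝ (⊤ : ℕ∞) (deriv (f 0) * g) := hf'.mul hg
    have c2 : ContDiff ℝ (⊤ : ℕ∞) (f 0 * deriv g) := hf.mul hg'
    refine ⟨c1.sub c2, fun j hj => ?_⟩
    have d1 : ContDiffAt ℝ (j : ℕ∞) (deriv (f 0) * g) π :=
      (c1.of_le (by exact_mod_cast le_top)).contDiffAt
    have d2 : ContDiffAt ℝ (j : ℕ∞) (f 0 * deriv g) π :=
      (c2.of_le (by exact_mod_cast le_top)).contDiffAt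
    rw [iteratedDeriv_sub d1 d2, aux_mul _ _ π 1 (m + 2) j hf' hg _ hz (by omega),
      aux_mul _ _ π 2 (m + 1) j hf hg' _ _ (by omega), sub_zero]
    · intro i hi
      interval_cases i
      · simpa using hval 0
      · simpa using hder 0
    · intro i hi
      rw [← iteratedDeriv_succ']
      exact hz _ (by omega)
    · intro i hi
      interval_cases i
      simpa using hder 0

/-- Iterated brackets of length `k = m+1` of `2π`-periodic smooth functions vanishing
with their first derivative at `π` have all derivatives up to order `k` vanishing
at `π` (i.e. brackets of length `k` of elements of `𝔟₁` lie in `𝔟_k`). -/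
theorem stmt_16 (m : ℕ) (f : Fin (m + 1) → ℝ → ℝ)
    (hsm : ∀ i, ContDiff ℝ (⊤ : ℕ∞) (f i))
    (hper : ∀ i, ∀ θ : ℝ, f i (θ + 2 * π) = f i θ)
    (hval : ∀ i, f i π = 0) (hder : ∀ i, deriv (f i) π = 0) :
    ∀ j : ℕ, j ≤ m + 1 → iteratedDeriv j (iterBracket m f) π = 0 := by
  exact fun j hj => (aux_main_s16 m f hsm hval hder).2 j (by omega)
end
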